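/- (Ecker–Huisken local curvature estimate, graphical form; Theorem 3.2(ii) / Theorem "localcurvethm".) Let n ≥ 1. There exists a constant C > 1, depending only on n, such that the following holds. Let ρ > 0, t₁ ∈ ℝ, t₂ ∈ (t₁,∞], x̂₀ ∈ ℝⁿ, and let f : (t₁,t₂) × Bⁿ(x̂₀,2ρ) → ℝ be a graphical mean curvature flow. Let s₁ ∈ (t₁,t₂) and s ∈ (s₁,t₂), and suppose sup_{t∈[s₁,s]} sup_{Bⁿ(x̂₀,2ρ)} |Df(t,·)| < ∞. Then for every x ∈ Bⁿ(x̂₀,ρ): |A|²(f(s,·),x) ≤ C·((s−s₁)⁻¹ + ρ⁻²) · sup_{t∈[s₁,s]} sup_{y∈Bⁿ(x̂₀,2ρ)} (1+|Df(t,y)|²)². -/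

import Mathlib

open Metric Set MeasureTheory

/-- Partial derivative `∂ᵢ g (x)`. -/
noncomputable def pd {n : ℕ} (g : EuclideanSpace ℝ (Fin n) → ℝ) (x : EuclideanSpace ℝ (Fin n))
    (i : Fin n) : ℝ :=
  fderiv ℝ g x (EuclideanSpace.single i 1)

/-- Second partial derivative `∂ᵢ∂ⱼ g (x)`. -/
noncomputable def pd2 {n : ℕ} (g : EuclideanSpace ℝ (Fin n) → ℝ) (x : EuclideanSpace ℝ (Fin n))
    (i j : Fin n) : ℝ :=
  fderiv ℝ (fun y => pd g y j) x (EuclideanSpace.single i 1)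

/-- Squared Euclidean norm `|Dg(x)|²` of the spatial gradient. -/
noncomputable def gradNormSq {n : ℕ} (g : EuclideanSpace ℝ (Fin n) → ℝ)
    (x : EuclideanSpace ℝ (Fin n)) : ℝ :=
  ∑ i, (pd g x i) ^ 2

/-- Euclidean norm `|Dg(x)|` of the spatial gradient. -/
noncomputable def gradNorm {n : ℕ} (g : EuclideanSpace ℝ (Fin n) → ℝ)
    (x : EuclideanSpace ℝ (Fin n)) : ℝ :=
  Real.sqrt (gradNormSq g x)

/-- Frobenius norm `|D²g(x)|` of the spatial Hessian. -/
noncomputable def hessNorm {n : ℕ} (g : EuclideanSpace ℝ (Fin n) → ℝ)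
    (x : EuclideanSpace ℝ (Fin n)) : ℝ :=
  Real.sqrt (∑ i, ∑ j, (pd2 g x i j) ^ 2)

/-- Right-hand side of the graphical mean curvature flow equation:
`∑ᵢⱼ (δᵢⱼ − ∂ᵢg ∂ⱼg / (1+|Dg|²)) ∂ᵢ∂ⱼ g`. -/
noncomputable def mcfRHS {n : ℕ} (g : EuclideanSpace ℝ (Fin n) → ℝ)
    (x : EuclideanSpace ℝ (Fin n)) : ℝ :=
  ∑ i, ∑ j,
    ((if i = j then (1 : ℝ) else 0) - pd g x i * pd g x j / (1 + gradNormSq g x)) * pd2 g x i j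

/-- `f` is a (smooth) graphical mean curvature flow on `I × U`. -/
def IsGMCF {n : ℕ} (I : Set ℝ) (U : Set (EuclideanSpace ℝ (Fin n)))
    (f : ℝ → EuclideanSpace ℝ (Fin n) → ℝ) : Prop :=
  ContDiffOn ℝ (⊤ : ℕ∞) (fun p : ℝ × EuclideanSpace ℝ (Fin n) => f p.1 p.2) (I ×ˢ U) ∧
  ∀ t ∈ I, ∀ x ∈ U, deriv (fun s => f s x) t = mcfRHS (f t) x

/-- Squared norm `|A|²(g,x)` of the second fundamental form of the graph of `g`
at `(x, g(x))`. -/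
noncomputable def secondFF2 {n : ℕ} (g : EuclideanSpace ℝ (Fin n) → ℝ)
    (x : EuclideanSpace ℝ (Fin n)) : ℝ :=
  ∑ i, ∑ j, ∑ k, ∑ l,
    ((if i = k then (1 : ℝ) else 0) - pd g x i * pd g x k / (1 + gradNormSq g x)) *
      ((if j = l then (1 : ℝ) else 0) - pd g x j * pd g x l / (1 + gradNormSq g x)) *
      (pd2 g x i j / Real.sqrt (1 + gradNormSq g x)) *
      (pd2 g x k l / Real.sqrt (1 + gradNormSq g x))

open scoped Matrix


/-- Frame adapted to the inverse metric. -/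
theorem exists_frame {n : ℕ} (p : Fin n → ℝ) (w : ℝ) (hw : w = 1 + p ⬝ᵥ p) :
    ∃ b : Fin n → Fin n → ℝ,
      (∀ i j, ∑ k, b k i * b k j = (if i = j then (1 : ℝ) else 0) - p i * p j / w) ∧
      (∀ k, b k ⬝ᵥ b k + (p ⬝ᵥ b k) ^ 2 = 1) := by
  have hpp : 0 ≤ p ⬝ᵥ p := by
    simp only [dotProduct]; exact Finset.sum_nonneg fun i _ => mul_self_nonneg _
  obtain ⟨v, hv0, hv⟩ : ∃ v : ℝ, 0 < v ∧ v ^ 2 = w :=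
    ⟨Real.sqrt w, Real.sqrt_pos.2 (by linarith), Real.sq_sqrt (by linarith)⟩
  have hp2 : p ⬝ᵥ p = v ^ 2 - 1 := by linarith
  set c : ℝ := 1 / (v * (v + 1)) with hc
  have hp2' : ∑ k, p k * p k = v ^ 2 - 1 := hp2
  have hpb : ∀ k, p ⬝ᵥ (fun i => (if k = i then (1 : ℝ) else 0) - c * (p k * p i)) = p k / v := by
    intro k
    have : p ⬝ᵥ (fun i => (if k = i then (1 : ℝ) else 0) - c * (p k * p i))
        = p k - c * p k * ∑ i, p i * p i := by
      simp only [dotProduct, mul_sub, Finset.sum_sub_distrib, Finset.mul_sum]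
      congr 1
      · simp
      · exact Finset.sum_congr rfl fun i _ => by ring
    rw [this, hp2', hc]; field_simp; ring
  refine ⟨fun k i => (if k = i then (1 : ℝ) else 0) - c * (p k * p i), ?_, ?_⟩
  · intro i j
    have : ∑ k, ((if k = i then (1 : ℝ) else 0) - c * (p k * p i)) *
        ((if k = j then (1 : ℝ) else 0) - c * (p k * p j))
        = (if i = j then (1 : ℝ) else 0) - 2 * c * (p i * p j) +
          c ^ 2 * (p i * p j) * ∑ k, p k * p k := by
      have h1 : ∀ k, ((if k = i then (1 : ℝ) else 0) - c * (p k * p i)) *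
        ((if k = j then (1 : ℝ) else 0) - c * (p k * p j))
        = (if k = i then (if k = j then (1 : ℝ) else 0) else 0)
          - (if k = i then c * (p k * p j) else 0) - (if k = j then c * (p k * p i) else 0)
          + c ^ 2 * (p i * p j) * (p k * p k) := by
        intro k; split_ifs <;> ring
      simp only [h1, Finset.sum_add_distrib, Finset.sum_sub_distrib, ← Finset.mul_sum]
      simp; ring
    rw [this, hp2', ← hv, hc]
    split_ifs <;> · field_simp; ring
  · intro k
    rw [hpb]
    have : (fun i => (if k = i then (1 : ℝ) else 0) - c * (p k * p i)) ⬝ᵥ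
        (fun i => (if k = i then (1 : ℝ) else 0) - c * (p k * p i))
        = 1 - 2 * c * (p k * p k) + c ^ 2 * (p k * p k) * ∑ i, p i * p i := by
      simp only [dotProduct]
      have h1 : ∀ i, ((if k = i then (1 : ℝ) else 0) - c * (p k * p i)) *
        ((if k = i then (1 : ℝ) else 0) - c * (p k * p i))
        = (if k = i then (1 : ℝ) else 0)
          - (if k = i then 2 * c * (p k * p i) else 0)
          + c ^ 2 * (p k * p k) * (p i * p i) := by
        intro i; split_ifs <;> ring
      simp only [h1, Finset.sum_add_distrib, Finset.sum_sub_distrib, ← Finset.mul_sum]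
      simp
    rw [this, hp2', hc]
    field_simp; ring

section frame
variable {n : ℕ} {p : Fin n → ℝ} {w : ℝ} {b : Fin n → Fin n → ℝ}

theorem frame_mat
    (hb : ∀ i j, ∑ k, b k i * b k j = (if i = j then (1 : ℝ) else 0) - p i * p j / w)
    (M : Matrix (Fin n) (Fin n) ℝ) :
    ∑ k, b k ⬝ᵥ (M *ᵥ b k) = M.trace - (p ⬝ᵥ (M *ᵥ p)) / w := by
  have h1 : ∑ k, b k ⬝ᵥ (M *ᵥ b k) = ∑ i, ∑ j, M i j * ∑ k, b k i * b k j := by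
    simp only [dotProduct, Matrix.mulVec, Finset.mul_sum]
    rw [Finset.sum_comm]
    refine Finset.sum_congr rfl fun i _ => ?_
    rw [Finset.sum_comm]
    exact Finset.sum_congr rfl fun j _ => Finset.sum_congr rfl fun k _ => by ring
  have h2 : (p ⬝ᵥ (M *ᵥ p)) / w = ∑ i, ∑ j, M i j * (p i * p j / w) := by
    simp only [dotProduct, Matrix.mulVec, Finset.mul_sum, Finset.sum_div]
    exact Finset.sum_congr rfl fun j _ => Finset.sum_congr rfl fun k _ => by ring
  have h3 : M.trace = ∑ i, ∑ j, M i j * (if i = j then (1 : ℝ) else 0) := by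
    simp [Matrix.trace]
  rw [h1, h2, h3, ← Finset.sum_sub_distrib]
  refine Finset.sum_congr rfl fun i _ => ?_
  rw [← Finset.sum_sub_distrib]
  exact Finset.sum_congr rfl fun j _ => by rw [hb]; ring

theorem frame_dot
    (hb : ∀ i j, ∑ k, b k i * b k j = (if i = j then (1 : ℝ) else 0) - p i * p j / w)
    (x y : Fin n → ℝ) :
    ∑ k, (x ⬝ᵥ b k) * (y ⬝ᵥ b k) = x ⬝ᵥ y - (p ⬝ᵥ x) * (p ⬝ᵥ y) / w := by
  have := frame_mat hb (Matrix.vecMulVec x y)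
  simp only [Matrix.vecMulVec_mulVec, Matrix.trace_vecMulVec] at this
  rw [← (show _ = _ from Finset.sum_congr rfl fun k _ => ?_), this]
  · simp [mul_comm, dotProduct_comm y p]
  · simp [mul_comm, dotProduct_comm]

theorem symm_dot {S : Matrix (Fin n) (Fin n) ℝ} (hS : Sᵀ = S) (x y : Fin n → ℝ) :
    x ⬝ᵥ (S *ᵥ y) = y ⬝ᵥ (S *ᵥ x) := by
  rw [Matrix.dotProduct_mulVec, ← Matrix.mulVec_transpose, hS, dotProduct_comm]

/-- Evolution of the numerator. -/
theorem LN_id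
    (hb : ∀ i j, ∑ k, b k i * b k j = (if i = j then (1 : ℝ) else 0) - p i * p j / w)
    (hw : w = 1 + p ⬝ᵥ p) (hw0 : 0 < w)
    {S T F : Matrix (Fin n) (Fin n) ℝ} (hS : Sᵀ = S) (hT : Tᵀ = T) {ξ : Fin n → ℝ} {lam : ℝ}
    (hq : S *ᵥ ξ = lam • (ξ + (p ⬝ᵥ ξ) • p))
    {N Nt : ℝ} (hN : N = ξ ⬝ᵥ (S *ᵥ ξ)) {P P1 P2 w1 w2 : ℝ} (hP : P = p ⬝ᵥ (S *ᵥ p))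
    (hP1 : P1 = p ⬝ᵥ (T *ᵥ p) + 2 * ((S *ᵥ ξ) ⬝ᵥ (S *ᵥ p)))
    (hP2 : P2 = p ⬝ᵥ (F *ᵥ p) + 4 * ((S *ᵥ ξ) ⬝ᵥ (T *ᵥ p)) + 2 * ((S *ᵥ ξ) ⬝ᵥ (S *ᵥ (S *ᵥ ξ)))
      + 2 * ((T *ᵥ ξ) ⬝ᵥ (S *ᵥ p)))
    (hw1 : w1 = 2 * (p ⬝ᵥ (S *ᵥ ξ)))
    (hw2 : w2 = 2 * ((S *ᵥ ξ) ⬝ᵥ (S *ᵥ ξ)) + 2 * (p ⬝ᵥ (T *ᵥ ξ)))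
    (hNt : Nt = F.trace - (P2 / w - 2 * P1 * w1 / w ^ 2 - P * w2 / w ^ 2 + 2 * P * w1 ^ 2 / w ^ 3))
    {z : ℝ} (hz : z = p ⬝ᵥ (S *ᵥ ξ))
    {N1 N2 : Fin n → ℝ}
    (hN1 : ∀ k, N1 k = (T *ᵥ ξ) ⬝ᵥ b k - (2 * z / w) * ((S *ᵥ ξ) ⬝ᵥ b k))
    (hN2 : ∀ k, N2 k = b k ⬝ᵥ (F *ᵥ b k) - (4 / w) * (((S *ᵥ ξ) ⬝ᵥ b k) * ((T *ᵥ p) ⬝ᵥ b k))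
      + (2 * P / w ^ 2) * (((S *ᵥ ξ) ⬝ᵥ b k) * ((S *ᵥ ξ) ⬝ᵥ b k))) :
    Nt - ∑ k, N2 k = -(2 / w) * (∑ k, ((S *ᵥ p) ⬝ᵥ b k) * N1 k) - 2 * lam ^ 2 * N / w := by
  have hs2 : ∑ k, N2 k = (F.trace - (p ⬝ᵥ (F *ᵥ p)) / w)
      - (4 / w) * ((S *ᵥ ξ) ⬝ᵥ (T *ᵥ p) - (p ⬝ᵥ (S *ᵥ ξ)) * (p ⬝ᵥ (T *ᵥ p)) / w)
      + (2 * P / w ^ 2) * ((S *ᵥ ξ) ⬝ᵥ (S *ᵥ ξ) - (p ⬝ᵥ (S *ᵥ ξ)) * (p ⬝ᵥ (S *ᵥ ξ)) / w) := by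
    simp only [hN2, Finset.sum_add_distrib, Finset.sum_sub_distrib, ← Finset.mul_sum,
      frame_mat hb, frame_dot hb]
  have hs1 : ∑ k, ((S *ᵥ p) ⬝ᵥ b k) * N1 k
      = ((S *ᵥ p) ⬝ᵥ (T *ᵥ ξ) - (p ⬝ᵥ (S *ᵥ p)) * (p ⬝ᵥ (T *ᵥ ξ)) / w)
      - (2 * z / w) * ((S *ᵥ p) ⬝ᵥ (S *ᵥ ξ) - (p ⬝ᵥ (S *ᵥ p)) * (p ⬝ᵥ (S *ᵥ ξ)) / w) := by
    rw [← frame_dot hb, ← frame_dot hb, Finset.mul_sum, ← Finset.sum_sub_distrib]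
    exact Finset.sum_congr rfl fun k _ => by rw [hN1]; ring
  have e1 : (S *ᵥ ξ) ⬝ᵥ (T *ᵥ p) = lam * (p ⬝ᵥ (T *ᵥ ξ) + (p ⬝ᵥ ξ) * (p ⬝ᵥ (T *ᵥ p))) := by
    rw [hq]; simp only [smul_dotProduct, add_dotProduct, smul_eq_mul]
    rw [symm_dot hT ξ p]
  have e2 : (S *ᵥ ξ) ⬝ᵥ (S *ᵥ (S *ᵥ ξ)) =
      lam * ((S *ᵥ ξ) ⬝ᵥ (S *ᵥ ξ) + (p ⬝ᵥ ξ) * ((S *ᵥ ξ) ⬝ᵥ (S *ᵥ p))) := by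
    have : (S *ᵥ ξ) ⬝ᵥ (S *ᵥ (S *ᵥ ξ)) = (lam • (ξ + (p ⬝ᵥ ξ) • p)) ⬝ᵥ (S *ᵥ (S *ᵥ ξ)) := by
      rw [← hq]
    rw [this]; simp only [smul_dotProduct, add_dotProduct, smul_eq_mul]
    rw [symm_dot hS ξ, symm_dot hS p]
  have e3 : (S *ᵥ ξ) ⬝ᵥ (S *ᵥ p) = lam * (z + (p ⬝ᵥ ξ) * P) := by
    have : (S *ᵥ ξ) ⬝ᵥ (S *ᵥ p) = (lam • (ξ + (p ⬝ᵥ ξ) • p)) ⬝ᵥ (S *ᵥ p) := by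
      rw [← hq]
    rw [this]; simp only [smul_dotProduct, add_dotProduct, smul_eq_mul]
    rw [symm_dot hS ξ, hz, hP]
  have e4 : (S *ᵥ ξ) ⬝ᵥ (S *ᵥ ξ) = lam * (N + (p ⬝ᵥ ξ) * z) := by
    have : (S *ᵥ ξ) ⬝ᵥ (S *ᵥ ξ) = (lam • (ξ + (p ⬝ᵥ ξ) • p)) ⬝ᵥ (S *ᵥ ξ) := by
      rw [← hq]
    rw [this]; simp only [smul_dotProduct, add_dotProduct, smul_eq_mul]
    rw [hz, hN]
  have e5 : z = lam * (p ⬝ᵥ ξ) * w := by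
    rw [hz, hq]; simp only [dotProduct_smul, dotProduct_add, smul_eq_mul]
    rw [hw]; ring
  have e6 : (S *ᵥ p) ⬝ᵥ (S *ᵥ ξ) = (S *ᵥ ξ) ⬝ᵥ (S *ᵥ p) := dotProduct_comm _ _
  have e7 : (S *ᵥ p) ⬝ᵥ (T *ᵥ ξ) = (T *ᵥ ξ) ⬝ᵥ (S *ᵥ p) := dotProduct_comm _ _
  rw [hs1, hs2, hNt, hP1, hP2, hw1, hw2, ← hz, ← hP, e6, e7, e2, e1, e3, e4, e5]
  generalize (p ⬝ᵥ ξ) = c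
  generalize (T *ᵥ ξ) ⬝ᵥ (S *ᵥ p) = a1
  generalize (p ⬝ᵥ (T *ᵥ ξ)) = a2
  field_simp
  ring

theorem sum_q_sq
    (hb : ∀ i j, ∑ k, b k i * b k j = (if i = j then (1 : ℝ) else 0) - p i * p j / w)
    (hw : w = 1 + p ⬝ᵥ p) (hw0 : 0 < w)
    {S : Matrix (Fin n) (Fin n) ℝ} {ξ : Fin n → ℝ} {lam : ℝ}
    (hq : S *ᵥ ξ = lam • (ξ + (p ⬝ᵥ ξ) • p)) {D : ℝ} (hD : D = ξ ⬝ᵥ ξ + (p ⬝ᵥ ξ) ^ 2) :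
    ∑ k, ((S *ᵥ ξ) ⬝ᵥ b k) * ((S *ᵥ ξ) ⬝ᵥ b k) = lam ^ 2 * D := by
  rw [frame_dot hb, hq]
  simp only [smul_dotProduct, add_dotProduct, dotProduct_smul, dotProduct_add, smul_eq_mul]
  rw [dotProduct_comm ξ p, hD]
  have : p ⬝ᵥ p = w - 1 := by linarith
  rw [this]
  field_simp
  ring

/-- Evolution of the denominator. -/
theorem LD_id
    (hb : ∀ i j, ∑ k, b k i * b k j = (if i = j then (1 : ℝ) else 0) - p i * p j / w)
    (hw : w = 1 + p ⬝ᵥ p) (hw0 : 0 < w)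
    {S T : Matrix (Fin n) (Fin n) ℝ} {ξ : Fin n → ℝ} {lam : ℝ}
    (hq : S *ᵥ ξ = lam • (ξ + (p ⬝ᵥ ξ) • p))
    {D Dt : ℝ} (hD : D = ξ ⬝ᵥ ξ + (p ⬝ᵥ ξ) ^ 2) {P P1 w1 : ℝ} (hP : P = p ⬝ᵥ (S *ᵥ p))
    (hP1 : P1 = p ⬝ᵥ (T *ᵥ p) + 2 * ((S *ᵥ ξ) ⬝ᵥ (S *ᵥ p)))
    (hw1 : w1 = 2 * (p ⬝ᵥ (S *ᵥ ξ)))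
    (hDt : Dt = 2 * (p ⬝ᵥ ξ) * (T.trace - (P1 / w - P * w1 / w ^ 2)))
    {D2 : Fin n → ℝ}
    (hD2 : ∀ k, D2 k = 2 * (((S *ᵥ ξ) ⬝ᵥ b k / w) ^ 2 * (p ⬝ᵥ p)) + 2 * ((S *ᵥ ξ) ⬝ᵥ b k / w) ^ 2
      + 2 * (p ⬝ᵥ ξ) * (b k ⬝ᵥ (T *ᵥ b k)
        - (2 / w) * (((S *ᵥ ξ) ⬝ᵥ b k) * ((S *ᵥ p) ⬝ᵥ b k)))) :
    Dt - ∑ k, D2 k = - 2 * lam ^ 2 * D / w := by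
  have hs : ∑ k, D2 k = (2 / w) * (∑ k, ((S *ᵥ ξ) ⬝ᵥ b k) * ((S *ᵥ ξ) ⬝ᵥ b k))
     + 2 * (p ⬝ᵥ ξ) * (∑ k, b k ⬝ᵥ (T *ᵥ b k)
        - (2 / w) * ∑ k, (((S *ᵥ ξ) ⬝ᵥ b k) * ((S *ᵥ p) ⬝ᵥ b k))) := by
    rw [Finset.mul_sum (s := Finset.univ) (a := 2 / w), Finset.mul_sum (s := Finset.univ) (a := 2 / w),
      ← Finset.sum_sub_distrib, Finset.mul_sum, ← Finset.sum_add_distrib]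
    refine Finset.sum_congr rfl fun k _ => ?_
    rw [hD2, show p ⬝ᵥ p = w - 1 by linarith]
    field_simp
    ring
  rw [hs, sum_q_sq hb hw hw0 hq hD, frame_mat hb, frame_dot hb, hDt, hP1, hw1, hP]
  field_simp
  ring

/-- Evolution of `w`. -/
theorem Lw_ineq
    (hb : ∀ i j, ∑ k, b k i * b k j = (if i = j then (1 : ℝ) else 0) - p i * p j / w)
    (hw : w = 1 + p ⬝ᵥ p) (hw0 : 0 < w)
    {S T : Matrix (Fin n) (Fin n) ℝ} (hS : Sᵀ = S) {ξ : Fin n → ℝ} {lam : ℝ}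
    (hq : S *ᵥ ξ = lam • (ξ + (p ⬝ᵥ ξ) • p)) (hlam : lam ≠ 0)
    {D : ℝ} (hD : D = ξ ⬝ᵥ ξ + (p ⬝ᵥ ξ) ^ 2) (hD0 : 0 < D)
    {P P1 w1 wt : ℝ} (hP : P = p ⬝ᵥ (S *ᵥ p))
    (hP1 : P1 = p ⬝ᵥ (T *ᵥ p) + 2 * ((S *ᵥ p) ⬝ᵥ (S *ᵥ p)))
    (hw1 : w1 = 2 * (p ⬝ᵥ (S *ᵥ p)))
    (hwt : wt = 2 * (T.trace - (P1 / w - P * w1 / w ^ 2)))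
    {w2 : Fin n → ℝ}
    (hw2 : ∀ k, w2 k = 2 * ((S *ᵥ b k) ⬝ᵥ (S *ᵥ b k)) + 2 * (b k ⬝ᵥ (T *ᵥ b k))) :
    wt - ∑ k, w2 k ≤ - 2 * lam ^ 2 - (6 / w) * ∑ k, ((S *ᵥ p) ⬝ᵥ b k) * ((S *ᵥ p) ⬝ᵥ b k) := by
  have h1 : ∀ k, (S *ᵥ b k) ⬝ᵥ (S *ᵥ b k) = (∑ l, ((S *ᵥ b k) ⬝ᵥ b l) * ((S *ᵥ b k) ⬝ᵥ b l))
      + ((S *ᵥ p) ⬝ᵥ b k) * ((S *ᵥ p) ⬝ᵥ b k) / w := by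
    intro k
    rw [frame_dot hb, symm_dot hS p (b k), dotProduct_comm (b k) (S *ᵥ p)]; ring
  have hcs : lam ^ 2 ≤ ∑ k, ∑ l, ((S *ᵥ b k) ⬝ᵥ b l) * ((S *ᵥ b k) ⬝ᵥ b l) := by
    have hk : ∀ k, lam * ((S *ᵥ ξ) ⬝ᵥ b k) = ∑ l, ((S *ᵥ b k) ⬝ᵥ b l) * ((S *ᵥ ξ) ⬝ᵥ b l) := by
      intro k
      rw [frame_dot hb]
      have : p ⬝ᵥ (S *ᵥ ξ) = lam * (p ⬝ᵥ ξ) * w := by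
        rw [hq]; simp only [dotProduct_smul, dotProduct_add, smul_eq_mul]
        rw [hw]; ring
      rw [this]
      have h2 : (S *ᵥ b k) ⬝ᵥ (S *ᵥ ξ) =
          lam * ((S *ᵥ b k) ⬝ᵥ ξ + (p ⬝ᵥ ξ) * ((S *ᵥ b k) ⬝ᵥ p)) := by
        conv_lhs => rw [hq]
        simp only [dotProduct_smul, dotProduct_add, smul_eq_mul]
      rw [h2, dotProduct_comm (S *ᵥ b k) ξ, symm_dot hS ξ (b k), dotProduct_comm (S *ᵥ b k) p,
        dotProduct_comm (S *ᵥ ξ)]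
      field_simp
      ring
    have hk2 : ∀ k, (lam * ((S *ᵥ ξ) ⬝ᵥ b k)) ^ 2 ≤
        (∑ l, ((S *ᵥ b k) ⬝ᵥ b l) * ((S *ᵥ b k) ⬝ᵥ b l)) * (lam ^ 2 * D) := by
      intro k
      rw [hk, ← sum_q_sq hb hw hw0 hq hD]
      simpa only [← pow_two] using Finset.sum_mul_sq_le_sq_mul_sq Finset.univ
        (fun l => (S *ᵥ b k) ⬝ᵥ b l) (fun l => (S *ᵥ ξ) ⬝ᵥ b l)
    have hk3 := Finset.sum_le_sum (s := Finset.univ) fun k _ => hk2 k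
    rw [← Finset.sum_mul] at hk3
    have hk4 : ∑ k, (lam * ((S *ᵥ ξ) ⬝ᵥ b k)) ^ 2 = lam ^ 2 * (lam ^ 2 * D) := by
      rw [← sum_q_sq hb hw hw0 hq hD, Finset.mul_sum]
      exact Finset.sum_congr rfl fun k _ => by ring
    rw [hk4] at hk3
    have : 0 < lam ^ 2 * D := by positivity
    exact le_of_mul_le_mul_right hk3 this
  have hs : ∑ k, w2 k = 2 * (∑ k, ∑ l, ((S *ᵥ b k) ⬝ᵥ b l) * ((S *ᵥ b k) ⬝ᵥ b l))
     + (2 / w) * (∑ k, ((S *ᵥ p) ⬝ᵥ b k) * ((S *ᵥ p) ⬝ᵥ b k)) + 2 * ∑ k, b k ⬝ᵥ (T *ᵥ b k) := by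
    rw [Finset.mul_sum, Finset.mul_sum, Finset.mul_sum, ← Finset.sum_add_distrib,
      ← Finset.sum_add_distrib]
    refine Finset.sum_congr rfl fun k _ => ?_
    rw [hw2, h1]; ring
  rw [hs, frame_mat hb, hwt, hP1, hw1, hP]
  have h3 := frame_dot hb (S *ᵥ p) (S *ᵥ p)
  have h4 : (S *ᵥ p) ⬝ᵥ (S *ᵥ p) = (∑ k, ((S *ᵥ p) ⬝ᵥ b k) * ((S *ᵥ p) ⬝ᵥ b k)) +
    (p ⬝ᵥ (S *ᵥ p)) * (p ⬝ᵥ (S *ᵥ p)) / w := by linarith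
  rw [h4]
  have h5 : ∀ A B a c d : ℝ, 2 * (a - ((c + 2 * (B + d * d / w)) / w - d * (2 * d) / w ^ 2)) -
      (2 * A + 2 / w * B + 2 * (a - c / w)) = - 2 * A - (6 / w) * B := by
    intro A B a c d; field_simp; ring
  rw [h5]; linarith
end frame


theorem final_term {η y e d r μ w m kk σ σ1 σ2 R : ℝ} (hw : 0 < w) (hm : 0 < m)
    (hkk : 0 < kk) (hσ : 0 < σ) (hμ : μ = m / (kk * w)) (hη : η = σ ^ 2) (hd : d = 2 * kk * r / m)
    (he : e = 2 * σ1 / σ) (hsum : e + 2 * y + d = 0) (hσR : σ ≤ R ^ 2) (hσ1 : σ1 ^ 2 ≤ 4 * R ^ 2)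
    (hσ2 : -2 ≤ σ2) :
    -(4 / w) * (r * y) - (6 * kk / (m * w)) * r ^ 2 - (2 * σ1 ^ 2 + 2 * σ * σ2) / η
      - 4 * (e * y) - 2 * y ^ 2 ≤ (8 * μ + 36) * R ^ 2 / η := by
  have hy : y = - (e + d) / 2 := by linarith
  have hr : r = m * d / (2 * kk) := by rw [hd]; field_simp
  have hμ0 : 0 < μ := by rw [hμ]; positivity
  have h1 : -(4 / w) * (r * y) = μ * d * (e + d) := by
    rw [hr, hμ, hy]; field_simp; ring
  have h2 : (6 * kk / (m * w)) * r ^ 2 = 3 / 2 * μ * d ^ 2 := by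
    rw [hr, hμ]; field_simp; ring
  have hη0 : 0 < η := by rw [hη]; positivity
  have h3 : e ^ 2 ≤ 16 * R ^ 2 / η := by
    rw [he, hη, div_pow]; gcongr; nlinarith
  have h4 : -((2 * σ1 ^ 2 + 2 * σ * σ2) / η) ≤ 4 * R ^ 2 / η := by
    rw [← neg_div]; gcongr; nlinarith [sq_nonneg σ1]
  have h5 : (8 * μ + 36) * R ^ 2 / η = (μ / 2 + 2) * (16 * R ^ 2 / η) + 4 * R ^ 2 / η := by
    field_simp; ring
  rw [h1, h2, h5]
  have h6 : (μ / 2 + 2) * e ^ 2 ≤ (μ / 2 + 2) * (16 * R ^ 2 / η) := by gcongr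
  have h7 : 0 ≤ (μ + 1) / 2 * (e - d) ^ 2 := by positivity
  rw [hy]
  nlinarith

theorem final_ineq {n : ℕ} {τ η N M m D w kk lam LN LD Lw σ R μ : ℝ}
    {N1 r σ1 σ2 : Fin n → ℝ} (hτ : 0 < τ) (hw : 0 < w) (hm : 0 < m)
    (hkk : 0 < kk) (hσ : 0 < σ) (hμ : μ = m / (kk * w)) (hη : η = σ ^ 2) (hD : 0 < D)
    (hlam : lam ≠ 0) (hN : N = lam * D) (hV : τ * η * N ^ 2 = M * m * D ^ 2)
    (hfo : ∀ k, τ * (2 * σ * σ1 k * N ^ 2 + 2 * η * N * N1 k) = M * (-(2 * kk * r k)) * D ^ 2)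
    (hso : 0 ≤ η * N ^ 2 + 2 * τ * η * N * LN - M * D ^ 2 * (-(kk * Lw)) - 2 * M * m * D * LD
      - τ * ∑ k, ((2 * σ1 k ^ 2 + 2 * σ * σ2 k) * N ^ 2 + 4 * (2 * σ * σ1 k) * N * N1 k
        + 2 * η * N1 k ^ 2))
    (hLN : LN = -(2 / w) * (∑ k, r k * N1 k) - 2 * lam ^ 2 * N / w)
    (hLD : LD = -2 * lam ^ 2 * D / w)
    (hLw : Lw ≤ -2 * lam ^ 2 - (6 / w) * ∑ k, r k * r k)
    (hσR : σ ≤ R ^ 2) (hσ1 : ∀ k, σ1 k ^ 2 ≤ 4 * R ^ 2)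
    (hσ2 : ∀ k, -2 ≤ σ2 k) :
    2 * kk * M ≤ η + n * τ * R ^ 2 * (8 * μ + 36) := by
  have hη0 : 0 < η := by rw [hη]; positivity
  have hN0 : N ≠ 0 := by rw [hN]; positivity
  have hV0 : 0 < τ * η * N ^ 2 := by positivity
  have hM : M = τ * η * N ^ 2 / (m * D ^ 2) := by
    rw [hV]; field_simp
  have hM0 : 0 < M := by rw [hM]; positivity
  set X : Fin n → ℝ := fun k => -(4 / w) * (r k * (N1 k / N)) - (6 * kk / (m * w)) * r k ^ 2
      - (2 * σ1 k ^ 2 + 2 * σ * σ2 k) / η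
      - 4 * ((2 * σ1 k / σ) * (N1 k / N)) - 2 * (N1 k / N) ^ 2 with hX
  have hXle : ∀ k, X k ≤ (8 * μ + 36) * R ^ 2 / η := by
    intro k
    refine final_term (d := 2 * kk * r k / m) hw hm hkk hσ hμ hη rfl rfl ?_ hσR (hσ1 k) (hσ2 k)
    have h := hfo k
    have h2 : M * (-(2 * kk * r k)) * D ^ 2 = - (τ * η * N ^ 2) * (2 * kk * r k / m) := by
      rw [hV]; field_simp
    rw [h2] at h
    have h3 : (τ * η * N ^ 2) * (2 * σ1 k / σ + 2 * (N1 k / N) + 2 * kk * r k / m) = 0 := by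
      have : τ * (2 * σ * σ1 k * N ^ 2 + 2 * η * N * N1 k) =
        (τ * η * N ^ 2) * (2 * σ1 k / σ + 2 * (N1 k / N)) := by
        rw [hη]; field_simp
      linarith
    rcases mul_eq_zero.1 h3 with h4 | h4
    · exact absurd h4 hV0.ne'
    · exact h4
  have hXsum : ∑ k, X k ≤ n * ((8 * μ + 36) * R ^ 2 / η) := by
    calc ∑ k, X k ≤ ∑ k : Fin n, (8 * μ + 36) * R ^ 2 / η := Finset.sum_le_sum fun k _ => hXle k
      _ = _ := by simp
  have hsumeq : (τ * η * N ^ 2) * ∑ k, X k = 2 * τ * η * N * (-(2 / w) * (∑ k, r k * N1 k))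
      + (τ * η * N ^ 2) * (kk / m) * (- (6 / w) * ∑ k, r k * r k)
      - τ * ∑ k, ((2 * σ1 k ^ 2 + 2 * σ * σ2 k) * N ^ 2 + 4 * (2 * σ * σ1 k) * N * N1 k
        + 2 * η * N1 k ^ 2) := by
    simp only [Finset.mul_sum]
    rw [← Finset.sum_add_distrib, ← Finset.sum_sub_distrib]
    refine Finset.sum_congr rfl fun k _ => ?_
    simp only [hX]
    rw [hη]
    field_simp
    ring
  have h1 : M * D ^ 2 = (τ * η * N ^ 2) / m := by rw [hV]; field_simp
  have h2 : - M * D ^ 2 * (-(kk * Lw)) ≤ (τ * η * N ^ 2) * (kk / m) *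
      (-2 * lam ^ 2 - (6 / w) * ∑ k, r k * r k) := by
    have : - M * D ^ 2 * (-(kk * Lw)) = (τ * η * N ^ 2) * (kk / m) * Lw := by
      rw [show - M * D ^ 2 * (-(kk * Lw)) = M * D ^ 2 * kk * Lw by ring, h1]; ring
    rw [this]
    gcongr
  have h3 : 2 * M * m * D * LD = - 4 * lam ^ 2 / w * (τ * η * N ^ 2) := by
    rw [hLD, hV]; ring
  have h4 : 2 * τ * η * N * LN = 2 * τ * η * N * (-(2 / w) * (∑ k, r k * N1 k))
      - 4 * lam ^ 2 / w * (τ * η * N ^ 2) := by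
    rw [hLN]; ring
  have h5 : 0 ≤ (τ * η * N ^ 2) * (1 / τ - 2 * lam ^ 2 * kk / m + ∑ k, X k) := by
    have : (τ * η * N ^ 2) * (1 / τ - 2 * lam ^ 2 * kk / m + ∑ k, X k)
      = η * N ^ 2 - (τ * η * N ^ 2) * (kk / m) * (2 * lam ^ 2) + (τ * η * N ^ 2) * ∑ k, X k := by
      field_simp
    rw [this, hsumeq]
    linear_combination hso + h2 + h4 - h3
  have h6 : 0 ≤ 1 / τ - 2 * lam ^ 2 * kk / m + ∑ k, X k := nonneg_of_mul_nonneg_right h5 hV0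
  have h7 : M = τ * η * lam ^ 2 / m := by rw [hM, hN]; field_simp
  have h8 : 0 ≤ (τ * η) * (1 / τ - 2 * lam ^ 2 * kk / m + n * ((8 * μ + 36) * R ^ 2 / η)) := by
    apply mul_nonneg (by positivity); linarith
  have h9 : (τ * η) * (1 / τ - 2 * lam ^ 2 * kk / m + n * ((8 * μ + 36) * R ^ 2 / η))
     = η - 2 * kk * M + n * τ * R ^ 2 * (8 * μ + 36) := by
    rw [h7]; field_simp
  linarith

/-- Two-jet of a function of one variable at zero. -/
def HasJet2 (φ : ℝ → ℝ) (a b c : ℝ) : Prop :=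
  φ 0 = a ∧ ∃ φ' : ℝ → ℝ, (∀ᶠ ε in nhds (0 : ℝ), HasDerivAt φ (φ' ε) ε) ∧ φ' 0 = b ∧
    HasDerivAt φ' c 0

namespace HasJet2

theorem const (a : ℝ) : HasJet2 (fun _ => a) a 0 0 :=
  ⟨rfl, fun _ => 0, Filter.Eventually.of_forall fun ε => hasDerivAt_const ε a, rfl,
    hasDerivAt_const _ _⟩

theorem affine (a b : ℝ) : HasJet2 (fun ε => a + ε * b) a b 0 :=
  ⟨by simp, fun _ => b, Filter.Eventually.of_forall fun ε => by
    simpa using ((hasDerivAt_id ε).mul_const b).const_add a, rfl, hasDerivAt_const _ _⟩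

theorem add {φ ψ : ℝ → ℝ} {a b c a' b' c' : ℝ} (h : HasJet2 φ a b c) (h' : HasJet2 ψ a' b' c') :
    HasJet2 (fun ε => φ ε + ψ ε) (a + a') (b + b') (c + c') := by
  obtain ⟨h0, φ', h1, h2, h3⟩ := h
  obtain ⟨k0, ψ', k1, k2, k3⟩ := h'
  refine ⟨by simp only [h0, k0], fun ε => φ' ε + ψ' ε, ?_, by simp only [h2, k2], h3.add k3⟩
  filter_upwards [h1, k1] with ε a b using a.add b

theorem mul {φ ψ : ℝ → ℝ} {a b c a' b' c' : ℝ} (h : HasJet2 φ a b c) (h' : HasJet2 ψ a' b' c') :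
    HasJet2 (fun ε => φ ε * ψ ε) (a * a') (b * a' + a * b') (c * a' + 2 * (b * b') + a * c') := by
  obtain ⟨h0, φ', h1, h2, h3⟩ := h
  obtain ⟨k0, ψ', k1, k2, k3⟩ := h'
  refine ⟨by simp only [h0, k0], fun ε => φ' ε * ψ ε + φ ε * ψ' ε, ?_,
    by simp only [h2, k2, h0, k0], ?_⟩
  · filter_upwards [h1, k1] with ε a b using a.mul b
  · refine ((h3.fun_mul k1.self_of_nhds).fun_add (h1.self_of_nhds.fun_mul k3)).congr_deriv ?_
    rw [h0, k0, h2, k2]; ring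

theorem sum {ι : Type*} (s : Finset ι) {φ : ι → ℝ → ℝ} {a b c : ι → ℝ}
    (h : ∀ i ∈ s, HasJet2 (φ i) (a i) (b i) (c i)) :
    HasJet2 (fun ε => ∑ i ∈ s, φ i ε) (∑ i ∈ s, a i) (∑ i ∈ s, b i) (∑ i ∈ s, c i) := by
  classical
  induction s using Finset.induction_on with
  | empty => simpa using const 0
  | insert i s hi ih =>
    simp only [Finset.sum_insert hi]
    exact (h i (Finset.mem_insert_self _ _)).add
      (ih fun j hj => h j (Finset.mem_insert_of_mem hj))

theorem inv {φ : ℝ → ℝ} {a b c : ℝ} (h : HasJet2 φ a b c) (ha : a ≠ 0) :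
    HasJet2 (fun ε => (φ ε)⁻¹) a⁻¹ (- b / a ^ 2) (- c / a ^ 2 + 2 * b ^ 2 / a ^ 3) := by
  obtain ⟨h0, φ', h1, h2, h3⟩ := h
  have hne : ∀ᶠ ε in nhds (0 : ℝ), φ ε ≠ 0 :=
    h1.self_of_nhds.continuousAt.eventually_ne (by rw [h0]; exact ha)
  refine ⟨by simp only [h0], fun ε => - φ' ε / (φ ε) ^ 2, ?_, by simp only [h2, h0], ?_⟩
  · filter_upwards [h1, hne] with ε a b using a.fun_inv b
  · refine (h3.fun_neg.fun_div (h1.self_of_nhds.fun_pow 2) (by rw [h0]; positivity)).congr_deriv ?_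
    rw [h0, h2]
    field_simp
    push_cast
    ring

theorem congr_jet {φ : ℝ → ℝ} {a b c a' b' c' : ℝ} (h : HasJet2 φ a b c) (ha : a = a')
    (hb : b = b') (hc : c = c') : HasJet2 φ a' b' c' := by subst ha hb hc; exact h

theorem unique {φ ψ : ℝ → ℝ} {a b c a' b' c' : ℝ} (h : HasJet2 φ a b c) (h' : HasJet2 ψ a' b' c')
    (he : ∀ᶠ ε in nhds (0 : ℝ), φ ε = ψ ε) : b = b' ∧ c = c' := by
  obtain ⟨h0, φ', h1, h2, h3⟩ := h
  obtain ⟨k0, ψ', k1, k2, k3⟩ := h'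
  have hd : φ' =ᶠ[nhds 0] ψ' := by
    filter_upwards [h1, k1, he.eventually_nhds] with ε a b c
    exact a.unique (b.congr_of_eventuallyEq c)
  refine ⟨by rw [← h2, ← k2]; exact hd.self_of_nhds, ?_⟩
  exact h3.unique (k3.congr_of_eventuallyEq hd)

theorem of_isLocalMax {φ : ℝ → ℝ} {a b c : ℝ} (h : HasJet2 φ a b c) (hm : IsLocalMax φ 0) :
    b = 0 ∧ c ≤ 0 := by
  obtain ⟨h0, φ', h1, h2, h3⟩ := h
  have hb : φ' 0 = 0 := hm.hasDerivAt_eq_zero h1.self_of_nhds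
  refine ⟨by rw [← h2, hb], ?_⟩
  by_contra hc
  push Not at hc
  have hd : deriv φ =ᶠ[nhds 0] φ' := by
    filter_upwards [h1] with ε a using a.deriv
  have hmin : IsLocalMin φ 0 := by
    apply isLocalMin_of_deriv_deriv_pos
    · rw [hd.deriv_eq, h3.deriv]; exact hc
    · rw [hd.self_of_nhds, hb]
    · exact h1.self_of_nhds.continuousAt
  have hconst : φ =ᶠ[nhds 0] fun _ => φ 0 := by
    filter_upwards [hm, hmin] with ε a b using le_antisymm a b
  have hz : φ' =ᶠ[nhds 0] fun _ => 0 := by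
    filter_upwards [h1, hconst.eventually_nhds] with ε a b
    exact a.unique ((hasDerivAt_const ε (φ 0)).congr_of_eventuallyEq b)
  have := h3.unique ((hasDerivAt_const (0 : ℝ) (0 : ℝ)).congr_of_eventuallyEq hz)
  linarith

end HasJet2

theorem deriv_nonneg_of_left_max {φ : ℝ → ℝ} {d δ : ℝ} (hδ : 0 < δ) (h : HasDerivAt φ d 0)
    (hm : ∀ ε, -δ < ε → ε < 0 → φ ε ≤ φ 0) : 0 ≤ d := by
  have h1 := h.hasDerivWithinAt (s := Iio 0)
  rw [hasDerivWithinAt_iff_tendsto_slope' (by simp)] at h1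
  refine ge_of_tendsto h1 ?_
  have : Ioo (-δ) 0 ∈ nhdsWithin (0 : ℝ) (Iio 0) := Ioo_mem_nhdsLT (by linarith)
  filter_upwards [this] with ε hε
  rw [slope_def_field]
  exact div_nonneg_of_nonpos (by linarith [hm ε hε.1 hε.2]) (by linarith [hε.2])

section derivs
variable {V : Type*} [NormedAddCommGroup V] [NormedSpace ℝ V]

/-- Directional derivative operator. -/
noncomputable def dd (z : V) (G : V → ℝ) : V → ℝ := fun P => fderiv ℝ G P z

variable {Ω : Set V} {G G' : V → ℝ} {P z z' : V}

theorem dd_smooth (hΩ : IsOpen Ω) (hG : ContDiffOn ℝ (⊤ : ℕ∞) G Ω) (z : V) :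
    ContDiffOn ℝ (⊤ : ℕ∞) (dd z G) Ω :=
  (hG.fderiv_of_isOpen (m := (⊤ : ℕ∞)) hΩ (by simp)).clm_apply contDiffOn_const

theorem smooth_diffAt (hΩ : IsOpen Ω) (hG : ContDiffOn ℝ (⊤ : ℕ∞) G Ω) (hP : P ∈ Ω) :
    DifferentiableAt ℝ G P :=
  (hG.contDiffAt (hΩ.mem_nhds hP)).differentiableAt (by simp)

theorem dd_congr (hΩ : IsOpen Ω) (h : EqOn G G' Ω) (z : V) : EqOn (dd z G) (dd z G') Ω := by
  intro P hP
  simp only [dd]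
  rw [(h.eventuallyEq_of_mem (hΩ.mem_nhds hP)).fderiv_eq]

theorem dd_comm (hΩ : IsOpen Ω) (hG : ContDiffOn ℝ (⊤ : ℕ∞) G Ω) (z z' : V) :
    EqOn (dd z (dd z' G)) (dd z' (dd z G)) Ω := by
  intro P hP
  have hat := hG.contDiffAt (hΩ.mem_nhds hP)
  have hs := hat.isSymmSndFDerivAt
    (by rw [minSmoothness_of_isRCLikeNormedField]; exact (WithTop.coe_le_coe.2 le_top :
      ((2 : ℕ∞) : WithTop ℕ∞) ≤ ((⊤ : ℕ∞) : WithTop ℕ∞)))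
  have hd : DifferentiableAt ℝ (fderiv ℝ G) P :=
    ((hG.fderiv_of_isOpen (m := (⊤ : ℕ∞)) hΩ (by simp)).contDiffAt
      (hΩ.mem_nhds hP)).differentiableAt (by simp)
  have key : ∀ a b : V, dd a (dd b G) P = fderiv ℝ (fderiv ℝ G) P a b := by
    intro a b
    change fderiv ℝ (fun y => fderiv ℝ G y b) P a = _
    rw [fderiv_clm_apply hd (differentiableAt_const _)]
    simp
  rw [key, key, hs.eq]

theorem dd_line (hΩ : IsOpen Ω) (hG : ContDiffOn ℝ (⊤ : ℕ∞) G Ω) (z : V) {ε : ℝ}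
    (hP : P + ε • z ∈ Ω) : HasDerivAt (fun e : ℝ => G (P + e • z)) (dd z G (P + ε • z)) ε := by
  have h1 := (smooth_diffAt hΩ hG hP).hasFDerivAt
  have h2 : HasDerivAt (fun e : ℝ => P + e • z) z ε := by
    simpa using ((hasDerivAt_id ε).smul_const z).const_add P
  exact h1.comp_hasDerivAt ε h2

theorem line_mem (hΩ : IsOpen Ω) (hP : P ∈ Ω) (z : V) : ∀ᶠ ε : ℝ in nhds 0, P + ε • z ∈ Ω := by
  have : ContinuousAt (fun e : ℝ => P + e • z) 0 := by fun_prop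
  exact this.eventually_mem (by simpa using hΩ.mem_nhds hP)

theorem dd_jet (hΩ : IsOpen Ω) (hG : ContDiffOn ℝ (⊤ : ℕ∞) G Ω) (hP : P ∈ Ω) (z : V) :
    HasJet2 (fun ε : ℝ => G (P + ε • z)) (G P) (dd z G P) (dd z (dd z G) P) := by
  refine ⟨by simp, fun ε => dd z G (P + ε • z), ?_, by simp, ?_⟩
  · filter_upwards [line_mem hΩ hP z] with ε hε using dd_line hΩ hG z hε
  · have := dd_line (P := P) (ε := 0) hΩ (dd_smooth hΩ hG z) z (by simpa using hP)
    simpa using this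

end derivs

section coords
variable {n : ℕ}

/-- Spatial direction. -/
noncomputable def sv (x : Fin n → ℝ) : ℝ × EuclideanSpace ℝ (Fin n) := (0, WithLp.toLp 2 x)

/-- Coordinate direction. -/
noncomputable def ez (i : Fin n) : ℝ × EuclideanSpace ℝ (Fin n) := (0, EuclideanSpace.single i 1)

/-- Gradient array. -/
noncomputable def gr (G : ℝ × EuclideanSpace ℝ (Fin n) → ℝ) (P : ℝ × EuclideanSpace ℝ (Fin n)) :
    Fin n → ℝ := fun i => dd (ez i) G P

/-- Hessian matrix. -/
noncomputable def hs (G : ℝ × EuclideanSpace ℝ (Fin n) → ℝ) (P : ℝ × EuclideanSpace ℝ (Fin n)) :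
    Matrix (Fin n) (Fin n) ℝ := Matrix.of fun i j => dd (ez i) (dd (ez j) G) P

variable {Ω : Set (ℝ × EuclideanSpace ℝ (Fin n))} {G : ℝ × EuclideanSpace ℝ (Fin n) → ℝ}
  {P : ℝ × EuclideanSpace ℝ (Fin n)}

theorem sv_eq (x : Fin n → ℝ) : sv x = ∑ i, x i • ez i := by
  simp only [sv, ez, Prod.smul_mk]
  ext i
  · simp [Prod.fst_sum]
  · simp [Prod.snd_sum, Pi.single_apply]

theorem dd_sv (x : Fin n → ℝ) (G : ℝ × EuclideanSpace ℝ (Fin n) → ℝ)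
    (P : ℝ × EuclideanSpace ℝ (Fin n)) : dd (sv x) G P = gr G P ⬝ᵥ x := by
  simp only [dd, gr, sv_eq, map_sum, map_smul, dotProduct, smul_eq_mul, mul_comm]

theorem hs_mulVec (hΩ : IsOpen Ω) (hG : ContDiffOn ℝ (⊤ : ℕ∞) G Ω) (hP : P ∈ Ω) (y : Fin n → ℝ) :
    hs G P *ᵥ y = gr (dd (sv y) G) P := by
  ext i
  simp only [gr]
  rw [dd_comm hΩ hG _ _ hP, dd_sv]
  simp only [Matrix.mulVec, hs, gr, dotProduct, Matrix.of_apply]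
  exact Finset.sum_congr rfl fun j _ => by rw [dd_comm hΩ hG _ _ hP]

theorem hs_symm (hΩ : IsOpen Ω) (hG : ContDiffOn ℝ (⊤ : ℕ∞) G Ω) (hP : P ∈ Ω) :
    (hs G P)ᵀ = hs G P := by
  ext i j
  simp only [hs, Matrix.transpose_apply, Matrix.of_apply]
  exact dd_comm hΩ hG _ _ hP

theorem hs_quad (hΩ : IsOpen Ω) (hG : ContDiffOn ℝ (⊤ : ℕ∞) G Ω) (hP : P ∈ Ω) (x y : Fin n → ℝ) :
    x ⬝ᵥ (hs G P *ᵥ y) = dd (sv x) (dd (sv y) G) P := by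
  rw [hs_mulVec hΩ hG hP, dd_sv, dotProduct_comm]

theorem dd_gr (hΩ : IsOpen Ω) (hG : ContDiffOn ℝ (⊤ : ℕ∞) G Ω) (hP : P ∈ Ω)
    (z : ℝ × EuclideanSpace ℝ (Fin n)) (i : Fin n) :
    dd z (fun P => gr G P i) P = gr (dd z G) P i := dd_comm hΩ hG _ _ hP

theorem dd_hs (hΩ : IsOpen Ω) (hG : ContDiffOn ℝ (⊤ : ℕ∞) G Ω) (hP : P ∈ Ω)
    (z : ℝ × EuclideanSpace ℝ (Fin n)) (i j : Fin n) :
    dd z (fun P => hs G P i j) P = hs (dd z G) P i j := by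
  have h1 := dd_comm hΩ (dd_smooth hΩ hG (ez j)) z (ez i) hP
  have h2 := dd_congr hΩ (dd_comm hΩ hG z (ez j)) (ez i) hP
  exact h1.trans h2

theorem gr_jet (hΩ : IsOpen Ω) (hG : ContDiffOn ℝ (⊤ : ℕ∞) G Ω) (hP : P ∈ Ω)
    (z : ℝ × EuclideanSpace ℝ (Fin n)) (i : Fin n) :
    HasJet2 (fun ε : ℝ => gr G (P + ε • z) i) (gr G P i) (gr (dd z G) P i)
      (gr (dd z (dd z G)) P i) := by
  have := dd_jet hΩ (dd_smooth hΩ hG (ez i)) hP z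
  refine this.congr_jet rfl (dd_gr hΩ hG hP z i) ?_
  exact (dd_congr hΩ (fun Q hQ => dd_gr hΩ hG hQ z i) z hP).trans
    (dd_gr hΩ (dd_smooth hΩ hG z) hP z i)

theorem hs_jet (hΩ : IsOpen Ω) (hG : ContDiffOn ℝ (⊤ : ℕ∞) G Ω) (hP : P ∈ Ω)
    (z : ℝ × EuclideanSpace ℝ (Fin n)) (i j : Fin n) :
    HasJet2 (fun ε : ℝ => hs G (P + ε • z) i j) (hs G P i j) (hs (dd z G) P i j)
      (hs (dd z (dd z G)) P i j) := by
  have := dd_jet hΩ (dd_smooth hΩ (dd_smooth hΩ hG (ez j)) (ez i)) hP z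
  refine this.congr_jet rfl (dd_hs hΩ hG hP z i j) ?_
  exact (dd_congr hΩ (fun Q hQ => dd_hs hΩ hG hQ z i j) z hP).trans
    (dd_hs hΩ (dd_smooth hΩ hG z) hP z i j)

theorem sum_dot (x y : Fin n → ℝ) (A : Matrix (Fin n) (Fin n) ℝ) :
    x ⬝ᵥ (A *ᵥ y) = ∑ i, ∑ j, x i * A i j * y j := by
  simp only [dotProduct, Matrix.mulVec, Finset.mul_sum, mul_assoc]

theorem jet_quad {x x1 x2 y y1 y2 : Fin n → ℝ} {X Y : ℝ → Fin n → ℝ}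
    {A A1 A2 : Matrix (Fin n) (Fin n) ℝ} {a : ℝ → Matrix (Fin n) (Fin n) ℝ}
    (hx : ∀ i, HasJet2 (fun ε => X ε i) (x i) (x1 i) (x2 i))
    (hy : ∀ i, HasJet2 (fun ε => Y ε i) (y i) (y1 i) (y2 i))
    (ha : ∀ i j, HasJet2 (fun ε => a ε i j) (A i j) (A1 i j) (A2 i j)) :
    HasJet2 (fun ε => X ε ⬝ᵥ (a ε *ᵥ Y ε)) (x ⬝ᵥ (A *ᵥ y))
      (x1 ⬝ᵥ (A *ᵥ y) + x ⬝ᵥ (A1 *ᵥ y) + x ⬝ᵥ (A *ᵥ y1))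
      (x2 ⬝ᵥ (A *ᵥ y) + x ⬝ᵥ (A2 *ᵥ y) + x ⬝ᵥ (A *ᵥ y2) + 2 * (x1 ⬝ᵥ (A1 *ᵥ y))
        + 2 * (x1 ⬝ᵥ (A *ᵥ y1)) + 2 * (x ⬝ᵥ (A1 *ᵥ y1))) := by
  simp only [sum_dot]
  refine (HasJet2.sum Finset.univ fun i _ => HasJet2.sum Finset.univ fun j _ =>
    ((hx i).mul (ha i j)).mul (hy j)).congr_jet rfl ?_ ?_
  · simp only [← Finset.sum_add_distrib]
    exact Finset.sum_congr rfl fun i _ => Finset.sum_congr rfl fun j _ => by ring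
  · simp only [← Finset.sum_add_distrib, Finset.mul_sum]
    exact Finset.sum_congr rfl fun i _ => Finset.sum_congr rfl fun j _ => by ring

theorem jet_dot {x x1 x2 y y1 y2 : Fin n → ℝ} {X Y : ℝ → Fin n → ℝ}
    (hx : ∀ i, HasJet2 (fun ε => X ε i) (x i) (x1 i) (x2 i))
    (hy : ∀ i, HasJet2 (fun ε => Y ε i) (y i) (y1 i) (y2 i)) :
    HasJet2 (fun ε => X ε ⬝ᵥ Y ε) (x ⬝ᵥ y) (x1 ⬝ᵥ y + x ⬝ᵥ y1)
      (x2 ⬝ᵥ y + 2 * (x1 ⬝ᵥ y1) + x ⬝ᵥ y2) := by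
  simp only [dotProduct]
  refine (HasJet2.sum Finset.univ fun i _ => (hx i).mul (hy i)).congr_jet rfl ?_ ?_
  · simp only [← Finset.sum_add_distrib]
  · simp only [← Finset.sum_add_distrib, Finset.mul_sum]

/-- The differentiated equation. -/
theorem pde_jet {F : ℝ × EuclideanSpace ℝ (Fin n) → ℝ} (hΩ : IsOpen Ω)
    (hF : ContDiffOn ℝ (⊤ : ℕ∞) F Ω) (hP : P ∈ Ω)
    (hpde : ∀ Q ∈ Ω, dd ((1 : ℝ), (0 : EuclideanSpace ℝ (Fin n))) F Q =
      (hs F Q).trace - (gr F Q ⬝ᵥ (hs F Q *ᵥ gr F Q)) * (1 + gr F Q ⬝ᵥ gr F Q)⁻¹)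
    (ξ : Fin n → ℝ) {p : Fin n → ℝ} {S T F4 : Matrix (Fin n) (Fin n) ℝ}
    {w Pp P1 P2 w1 w2 : ℝ}
    (hp : p = gr F P) (hS : S = hs F P) (hT : T = hs (dd (sv ξ) F) P)
    (hF4 : F4 = hs (dd (sv ξ) (dd (sv ξ) F)) P)
    (hw : w = 1 + p ⬝ᵥ p)
    (hPp : Pp = p ⬝ᵥ (S *ᵥ p))
    (hP1 : P1 = p ⬝ᵥ (T *ᵥ p) + 2 * ((S *ᵥ ξ) ⬝ᵥ (S *ᵥ p)))
    (hP2 : P2 = p ⬝ᵥ (F4 *ᵥ p) + 4 * ((S *ᵥ ξ) ⬝ᵥ (T *ᵥ p)) + 2 * ((S *ᵥ ξ) ⬝ᵥ (S *ᵥ (S *ᵥ ξ)))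
      + 2 * ((T *ᵥ ξ) ⬝ᵥ (S *ᵥ p)))
    (hw1 : w1 = 2 * (p ⬝ᵥ (S *ᵥ ξ)))
    (hw2 : w2 = 2 * ((S *ᵥ ξ) ⬝ᵥ (S *ᵥ ξ)) + 2 * (p ⬝ᵥ (T *ᵥ ξ))) :
    dd (sv ξ) (dd ((1 : ℝ), (0 : EuclideanSpace ℝ (Fin n))) F) P =
        T.trace - (P1 / w - Pp * w1 / w ^ 2) ∧
    dd (sv ξ) (dd (sv ξ) (dd ((1 : ℝ), (0 : EuclideanSpace ℝ (Fin n))) F)) P =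
      F4.trace - (P2 / w - 2 * P1 * w1 / w ^ 2 - Pp * w2 / w ^ 2 + 2 * Pp * w1 ^ 2 / w ^ 3) := by
  have hSs : Sᵀ = S := by rw [hS]; exact hs_symm hΩ hF hP
  have hTs : Tᵀ = T := by rw [hT]; exact hs_symm hΩ (dd_smooth hΩ hF _) hP
  have hw0 : 0 < w := by
    have : 0 ≤ p ⬝ᵥ p := Finset.sum_nonneg fun i _ => mul_self_nonneg _
    linarith
  have jp : ∀ i, HasJet2 (fun ε : ℝ => gr F (P + ε • sv ξ) i) (p i) ((S *ᵥ ξ) i) ((T *ᵥ ξ) i) := by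
    intro i
    refine (gr_jet hΩ hF hP (sv ξ) i).congr_jet (by rw [hp]) ?_ ?_
    · rw [hS, hs_mulVec hΩ hF hP]
    · rw [hT, hs_mulVec hΩ (dd_smooth hΩ hF _) hP]
  have jS : ∀ i j, HasJet2 (fun ε : ℝ => hs F (P + ε • sv ξ) i j) (S i j) (T i j) (F4 i j) := by
    intro i j
    exact (hs_jet hΩ hF hP (sv ξ) i j).congr_jet (by rw [hS]) (by rw [hT]) (by rw [hF4])
  have jtr : HasJet2 (fun ε : ℝ => (hs F (P + ε • sv ξ)).trace) S.trace T.trace F4.trace :=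
    HasJet2.sum Finset.univ fun i _ => jS i i
  have jw : HasJet2 (fun ε : ℝ => 1 + gr F (P + ε • sv ξ) ⬝ᵥ gr F (P + ε • sv ξ)) w w1 w2 := by
    refine ((HasJet2.const 1).add (jet_dot jp jp)).congr_jet (by rw [hw]) ?_ ?_
    · rw [hw1, dotProduct_comm p]; ring
    · rw [hw2, dotProduct_comm p (T *ᵥ ξ)]; ring
  have jP : HasJet2 (fun ε : ℝ => gr F (P + ε • sv ξ) ⬝ᵥ (hs F (P + ε • sv ξ) *ᵥ
      gr F (P + ε • sv ξ))) Pp P1 P2 := by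
    refine (jet_quad jp jp jS).congr_jet (by rw [hPp]) ?_ ?_
    · rw [hP1, symm_dot hSs p (S *ᵥ ξ)]; ring
    · rw [hP2, symm_dot hSs p (T *ᵥ ξ), symm_dot hTs p (S *ᵥ ξ)]; ring
  have jR := jtr.add ((HasJet2.const (-1)).mul (jP.mul (jw.inv hw0.ne')))
  have jL := dd_jet hΩ (dd_smooth hΩ hF ((1 : ℝ), (0 : EuclideanSpace ℝ (Fin n)))) hP (sv ξ)
  have heq : ∀ᶠ ε : ℝ in nhds 0, dd ((1 : ℝ), (0 : EuclideanSpace ℝ (Fin n))) F (P + ε • sv ξ) =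
      (hs F (P + ε • sv ξ)).trace + (-1) * ((gr F (P + ε • sv ξ) ⬝ᵥ (hs F (P + ε • sv ξ) *ᵥ
      gr F (P + ε • sv ξ))) * (1 + gr F (P + ε • sv ξ) ⬝ᵥ gr F (P + ε • sv ξ))⁻¹) := by
    filter_upwards [line_mem hΩ hP (sv ξ)] with ε hε
    rw [hpde _ hε]; ring
  obtain ⟨h1, h2⟩ := jL.unique jR heq
  constructor
  · rw [h1]; field_simp; ring
  · rw [h2]; field_simp; ring

end coords

section maxpoint
variable {n : ℕ}

/-- The quadratic form of the Hessian. -/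
noncomputable def ThN (F : ℝ × EuclideanSpace ℝ (Fin n) → ℝ) (P : ℝ × EuclideanSpace ℝ (Fin n))
    (x : Fin n → ℝ) : ℝ := x ⬝ᵥ (hs F P *ᵥ x)

/-- The induced metric. -/
noncomputable def ThD (F : ℝ × EuclideanSpace ℝ (Fin n) → ℝ) (P : ℝ × EuclideanSpace ℝ (Fin n))
    (x : Fin n → ℝ) : ℝ := x ⬝ᵥ x + (gr F P ⬝ᵥ x) * (gr F P ⬝ᵥ x)

/-- Squared gradient factor. -/
noncomputable def ThW (F : ℝ × EuclideanSpace ℝ (Fin n) → ℝ) (P : ℝ × EuclideanSpace ℝ (Fin n)) :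
    ℝ := 1 + gr F P ⬝ᵥ gr F P

/-- Displacement array. -/
noncomputable def ThY (x₀ : EuclideanSpace ℝ (Fin n)) (P : ℝ × EuclideanSpace ℝ (Fin n)) :
    Fin n → ℝ := fun i => P.2 i - x₀ i

/-- Cutoff. -/
noncomputable def ThS (R : ℝ) (x₀ : EuclideanSpace ℝ (Fin n))
    (P : ℝ × EuclideanSpace ℝ (Fin n)) : ℝ := R ^ 2 + (-1) * (ThY x₀ P ⬝ᵥ ThY x₀ P)

/-- The test function. -/
noncomputable def Theta (F : ℝ × EuclideanSpace ℝ (Fin n) → ℝ) (s₁ R : ℝ)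
    (x₀ : EuclideanSpace ℝ (Fin n)) (M kk : ℝ)
    (P : ℝ × EuclideanSpace ℝ (Fin n)) (x : Fin n → ℝ) : ℝ :=
  ((P.1 - s₁) * (ThS R x₀ P * ThS R x₀ P)) * (ThN F P x * ThN F P x) +
    (-M) * ((1 + (-kk) * ThW F P) * (ThD F P x * ThD F P x))

variable {Ω : Set (ℝ × EuclideanSpace ℝ (Fin n))} {F : ℝ × EuclideanSpace ℝ (Fin n) → ℝ}
  {P : ℝ × EuclideanSpace ℝ (Fin n)}

theorem theta_jet (hΩ : IsOpen Ω) (hF : ContDiffOn ℝ (⊤ : ℕ∞) F Ω) (hP : P ∈ Ω)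
    (s₁ R : ℝ) (x₀ : EuclideanSpace ℝ (Fin n)) (M kk : ℝ) (ξ β : Fin n → ℝ)
    (z : ℝ × EuclideanSpace ℝ (Fin n))
    {N N1 N2 c c1 c2 D D1 D2 w w1 w2 σ σ1 σ2 τ : ℝ}
    (hτ : τ = P.1 - s₁) (hσ : σ = ThS R x₀ P) (hσ1 : σ1 = -2 * (ThY x₀ P ⬝ᵥ z.2.ofLp))
    (hσ2 : σ2 = -2 * (z.2.ofLp ⬝ᵥ z.2.ofLp))
    (hN : N = ThN F P ξ)
    (hN1 : N1 = ξ ⬝ᵥ (hs (dd z F) P *ᵥ ξ) + 2 * (ξ ⬝ᵥ (hs F P *ᵥ β)))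
    (hN2 : N2 = ξ ⬝ᵥ (hs (dd z (dd z F)) P *ᵥ ξ) + 4 * (ξ ⬝ᵥ (hs (dd z F) P *ᵥ β))
      + 2 * (β ⬝ᵥ (hs F P *ᵥ β)))
    (hc : c = gr F P ⬝ᵥ ξ) (hc1 : c1 = gr (dd z F) P ⬝ᵥ ξ + gr F P ⬝ᵥ β)
    (hc2 : c2 = gr (dd z (dd z F)) P ⬝ᵥ ξ + 2 * (gr (dd z F) P ⬝ᵥ β))
    (hD : D = ThD F P ξ) (hD1 : D1 = 2 * (ξ ⬝ᵥ β) + 2 * c * c1)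
    (hD2 : D2 = 2 * (β ⬝ᵥ β) + 2 * c1 ^ 2 + 2 * c * c2)
    (hw : w = ThW F P) (hw1 : w1 = 2 * (gr F P ⬝ᵥ gr (dd z F) P))
    (hw2 : w2 = 2 * (gr (dd z F) P ⬝ᵥ gr (dd z F) P) + 2 * (gr F P ⬝ᵥ gr (dd z (dd z F)) P)) :
    ∃ c', HasJet2 (fun ε : ℝ => Theta F s₁ R x₀ M kk (P + ε • z) (ξ + ε • β))
      (Theta F s₁ R x₀ M kk P ξ)
      (z.1 * σ ^ 2 * N ^ 2 + τ * (2 * σ * σ1 * N ^ 2 + 2 * σ ^ 2 * N * N1)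
        - M * (-(kk * w1) * D ^ 2 + 2 * (1 - kk * w) * D * D1)) c' ∧
      (z.1 = 0 → c' = τ * ((2 * σ1 ^ 2 + 2 * σ * σ2) * N ^ 2 + 4 * (2 * σ * σ1) * N * N1
          + σ ^ 2 * (2 * N1 ^ 2 + 2 * N * N2))
        - M * (-(kk * w2) * D ^ 2 + 4 * (-(kk * w1)) * D * D1
          + (1 - kk * w) * (2 * D1 ^ 2 + 2 * D * D2))) := by
  have hSs := hs_symm hΩ hF hP
  have hAs := hs_symm hΩ (dd_smooth hΩ hF z) hP
  have jx : ∀ i, HasJet2 (fun ε : ℝ => (ξ + ε • β) i) (ξ i) (β i) ((0 : Fin n → ℝ) i) := fun i => by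
    simpa using HasJet2.affine (ξ i) (β i)
  have jτ : HasJet2 (fun ε : ℝ => (P + ε • z).1 - s₁) τ z.1 0 := by
    have := HasJet2.affine τ z.1
    convert this using 2 with ε
    simp [hτ]; ring
  have jy : ∀ i, HasJet2 (fun ε : ℝ => ThY x₀ (P + ε • z) i) (ThY x₀ P i) (z.2.ofLp i)
      ((0 : Fin n → ℝ) i) := fun i => by
    have := HasJet2.affine (ThY x₀ P i) (z.2.ofLp i)
    show HasJet2 _ _ _ (0 : ℝ)
    convert this using 2 with ε
    simp [ThY]; ring
  have jσ : HasJet2 (fun ε : ℝ => ThS R x₀ (P + ε • z)) σ σ1 σ2 := by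
    refine ((HasJet2.const (R ^ 2)).add ((HasJet2.const (-1)).mul (jet_dot jy jy))).congr_jet
      (by rw [hσ, ThS]) ?_ ?_
    · rw [hσ1, dotProduct_comm z.2.ofLp]; ring
    · rw [hσ2]; simp
  have jN : HasJet2 (fun ε : ℝ => ThN F (P + ε • z) (ξ + ε • β)) N N1 N2 := by
    refine (jet_quad jx jx (hs_jet hΩ hF hP z)).congr_jet (by rw [hN, ThN]) ?_ ?_
    · rw [hN1, symm_dot hSs β ξ]; ring
    · rw [hN2, symm_dot hAs β ξ]; simp; ring
  have jc : HasJet2 (fun ε : ℝ => gr F (P + ε • z) ⬝ᵥ (ξ + ε • β)) c c1 c2 := by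
    refine (jet_dot (gr_jet hΩ hF hP z) jx).congr_jet (by rw [hc]) ?_ ?_
    · rw [hc1]
    · rw [hc2]; simp
  have jD : HasJet2 (fun ε : ℝ => ThD F (P + ε • z) (ξ + ε • β)) D D1 D2 := by
    refine ((jet_dot jx jx).add (jc.mul jc)).congr_jet (by rw [hD, ThD, hc]) ?_ ?_
    · rw [hD1, dotProduct_comm β ξ]; ring
    · rw [hD2]; simp; ring
  have jw : HasJet2 (fun ε : ℝ => ThW F (P + ε • z)) w w1 w2 := by
    refine ((HasJet2.const 1).add (jet_dot (gr_jet hΩ hF hP z) (gr_jet hΩ hF hP z))).congr_jet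
      (by rw [hw, ThW]) ?_ ?_
    · rw [hw1, dotProduct_comm (gr (dd z F) P)]; ring
    · rw [hw2, dotProduct_comm (gr (dd z (dd z F)) P)]; ring
  have j := ((jτ.mul (jσ.mul jσ)).mul (jN.mul jN)).add ((HasJet2.const (-M)).mul
    (((HasJet2.const 1).add ((HasJet2.const (-kk)).mul jw)).mul (jD.mul jD)))
  refine ⟨_, j.congr_jet (by rw [Theta, hτ, hσ, hN, hw, hD]) ?_ rfl, ?_⟩
  · ring
  · intro h0; rw [h0]; ring

theorem dd_rot3 (hΩ : IsOpen Ω) (hF : ContDiffOn ℝ (⊤ : ℕ∞) F Ω)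
    (x y z : ℝ × EuclideanSpace ℝ (Fin n)) :
    EqOn (dd x (dd y (dd z F))) (dd y (dd z (dd x F))) Ω := fun _ hP =>
  (dd_comm hΩ (dd_smooth hΩ hF z) x y hP).trans (dd_congr hΩ (dd_comm hΩ hF x z) y hP)

set_option maxHeartbeats 4000000 in
theorem max_point (hΩ : IsOpen Ω) (hF : ContDiffOn ℝ (⊤ : ℕ∞) F Ω) (hP : P ∈ Ω)
    (hpde : ∀ Q ∈ Ω, dd ((1 : ℝ), (0 : EuclideanSpace ℝ (Fin n))) F Q =
      (hs F Q).trace - (gr F Q ⬝ᵥ (hs F Q *ᵥ gr F Q)) * (1 + gr F Q ⬝ᵥ gr F Q)⁻¹)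
    (s₁ R : ℝ) (x₀ : EuclideanSpace ℝ (Fin n)) (M kk : ℝ) (ξ : Fin n → ℝ)
    (hkk : 0 < kk) (hτ : 0 < P.1 - s₁) (hσ : 0 < ThS R x₀ P)
    (hm : 0 < 1 - kk * ThW F P) (hD : 0 < ThD F P ξ) (hN : ThN F P ξ ≠ 0)
    (h0 : Theta F s₁ R x₀ M kk P ξ = 0)
    (hspace : ∀ᶠ Q in nhds P, Q.1 = P.1 → ∀ x, Theta F s₁ R x₀ M kk Q x ≤ 0)
    (htime : ∃ δ > 0, ∀ ε : ℝ, -δ < ε → ε < 0 →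
      Theta F s₁ R x₀ M kk (P + ε • ((1 : ℝ), (0 : EuclideanSpace ℝ (Fin n)))) ξ ≤ 0) :
    2 * kk * M ≤ ThS R x₀ P ^ 2 + n * (P.1 - s₁) * R ^ 2 *
      (8 * ((1 - kk * ThW F P) / (kk * ThW F P)) + 36) := by
  have hlocmax : ∀ b β : Fin n → ℝ, IsLocalMax
      (fun ε : ℝ => Theta F s₁ R x₀ M kk (P + ε • sv b) (ξ + ε • β)) 0 := by
    intro b β
    have hcont : ContinuousAt (fun e : ℝ => P + e • sv b) 0 := by fun_prop
    have := hcont.tendsto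
    simp only [zero_smul, add_zero] at this
    filter_upwards [this.eventually hspace] with ε hε
    simp only [zero_smul, add_zero]
    rw [h0]
    exact hε (by simp [sv]) _
  obtain ⟨p, hp⟩ : ∃ p, p = gr F P := ⟨_, rfl⟩
  obtain ⟨S, hS⟩ : ∃ S, S = hs F P := ⟨_, rfl⟩
  obtain ⟨w, hw⟩ : ∃ w, w = ThW F P := ⟨_, rfl⟩
  obtain ⟨N, hNe⟩ : ∃ N, N = ThN F P ξ := ⟨_, rfl⟩
  obtain ⟨D, hDe⟩ : ∃ D, D = ThD F P ξ := ⟨_, rfl⟩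
  obtain ⟨σ, hσe⟩ : ∃ σ, σ = ThS R x₀ P := ⟨_, rfl⟩
  obtain ⟨τ, hτe⟩ : ∃ τ, τ = P.1 - s₁ := ⟨_, rfl⟩
  obtain ⟨lam, hlam⟩ : ∃ lam, lam = N / D := ⟨_, rfl⟩
  rw [← hw] at hm ⊢
  rw [← hσe] at hσ ⊢
  rw [← hτe] at hτ ⊢
  rw [← hNe] at hN
  rw [← hDe] at hD
  have hwp : w = 1 + p ⬝ᵥ p := by rw [hw, ThW, hp]
  have hDp : D = ξ ⬝ᵥ ξ + (p ⬝ᵥ ξ) ^ 2 := by rw [hDe, ThD, hp]; ring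
  have hNp : N = ξ ⬝ᵥ (S *ᵥ ξ) := by rw [hNe, ThN, hS]
  have hw0 : 0 < w := by
    have : 0 ≤ p ⬝ᵥ p := Finset.sum_nonneg fun i _ => mul_self_nonneg _
    linarith
  have hlam0 : lam ≠ 0 := by rw [hlam]; exact div_ne_zero hN hD.ne'
  have hNl : N = lam * D := by rw [hlam]; field_simp
  have hSs : Sᵀ = S := by rw [hS]; exact hs_symm hΩ hF hP
  have hV : τ * σ ^ 2 * N ^ 2 = M * (1 - kk * w) * D ^ 2 := by
    have := h0
    rw [Theta, ← hτe, ← hσe, ← hNe, ← hw, ← hDe] at this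
    linear_combination this
  have hdd0 : ∀ G : ℝ × EuclideanSpace ℝ (Fin n) → ℝ, dd (sv (0 : Fin n → ℝ)) G = fun _ => 0 := by
    intro G; ext Q; rw [dd_sv]; simp
  -- eigenvector condition
  have hq : S *ᵥ ξ = lam • (ξ + (p ⬝ᵥ ξ) • p) := by
    refine dotProduct_eq _ _ fun β => ?_
    obtain ⟨c', hj, -⟩ := theta_jet hΩ hF hP s₁ R x₀ M kk ξ β (sv 0) hτe hσe rfl rfl hNe rfl rfl
      rfl rfl rfl hDe rfl rfl hw rfl rfl
    have h1 := (hj.of_isLocalMax (hlocmax 0 β)).1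
    have hz1 : (sv (0 : Fin n → ℝ)).1 = 0 := rfl
    have hz2 : (sv (0 : Fin n → ℝ)).2.ofLp = 0 := rfl
    have hg0 : gr (dd (sv (0 : Fin n → ℝ)) F) P = 0 := by
      rw [← hs_mulVec hΩ hF hP]; simp
    have hh0 : ξ ⬝ᵥ (hs (dd (sv (0 : Fin n → ℝ)) F) P *ᵥ ξ) = 0 := by
      rw [hs_quad hΩ (dd_smooth hΩ hF _) hP, dd_rot3 hΩ hF _ _ _ hP]
      rw [dd_comm hΩ (dd_smooth hΩ hF _) _ _ hP, hdd0]
    rw [hz1, hz2, hg0, hh0, ← hp, ← hS] at h1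
    simp only [dotProduct_zero, zero_dotProduct, mul_zero, zero_mul, zero_add, neg_zero] at h1
    have h2 : τ * σ ^ 2 * N * (ξ ⬝ᵥ (S *ᵥ β)) =
        M * (1 - kk * w) * D * (ξ ⬝ᵥ β + (p ⬝ᵥ ξ) * (p ⬝ᵥ β)) := by
      linear_combination h1 / 4
    have h3 : (τ * σ ^ 2 * N) * (ξ ⬝ᵥ (S *ᵥ β)) =
        (τ * σ ^ 2 * N) * (lam * (ξ ⬝ᵥ β + (p ⬝ᵥ ξ) * (p ⬝ᵥ β))) := by
      have h4 : M * (1 - kk * w) * D = τ * σ ^ 2 * N * lam := by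
        have : D * (M * (1 - kk * w) * D) = D * (τ * σ ^ 2 * N * lam) := by
          rw [hNl] at hV ⊢
          linear_combination -hV
        exact mul_left_cancel₀ hD.ne' this
      rw [h2, h4]; ring
    have h5 := mul_left_cancel₀ (by positivity) h3
    rw [dotProduct_comm (S *ᵥ ξ), symm_dot hSs β ξ, h5]
    simp only [smul_dotProduct, add_dotProduct, smul_eq_mul]
  obtain ⟨b, hb, hb1⟩ := exists_frame p w hwp
  obtain ⟨T, hT⟩ : ∃ T, T = hs (dd (sv ξ) F) P := ⟨_, rfl⟩
  obtain ⟨Tp, hTp⟩ : ∃ T, T = hs (dd (sv p) F) P := ⟨_, rfl⟩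
  obtain ⟨F4, hF4⟩ : ∃ T, T = hs (dd (sv ξ) (dd (sv ξ) F)) P := ⟨_, rfl⟩
  have hTs : Tᵀ = T := by rw [hT]; exact hs_symm hΩ (dd_smooth hΩ hF _) hP
  obtain ⟨z, hz⟩ : ∃ z, z = p ⬝ᵥ (S *ᵥ ξ) := ⟨_, rfl⟩
  set q := S *ᵥ ξ with hqdef
  set r := S *ᵥ p with hrdef
  obtain ⟨Pp, hPp⟩ : ∃ a, a = p ⬝ᵥ r := ⟨_, rfl⟩
  -- time data
  obtain ⟨hE1, hE2⟩ := pde_jet hΩ hF hP hpde ξ hp hS hT hF4 hwp hPp rfl rfl rfl rfl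
  obtain ⟨hEp, -⟩ := pde_jet hΩ hF hP hpde p hp hS hTp rfl hwp hPp rfl rfl rfl rfl
  obtain ⟨Nt, hNt⟩ : ∃ a, a = dd (sv ξ) (dd (sv ξ)
    (dd ((1 : ℝ), (0 : EuclideanSpace ℝ (Fin n))) F)) P := ⟨_, rfl⟩
  obtain ⟨ct, hct⟩ : ∃ a, a = dd (sv ξ) (dd ((1 : ℝ), (0 : EuclideanSpace ℝ (Fin n))) F) P :=
    ⟨_, rfl⟩
  obtain ⟨wt, hwt⟩ : ∃ a, a = 2 * dd (sv p) (dd ((1 : ℝ), (0 : EuclideanSpace ℝ (Fin n))) F) P :=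
    ⟨_, rfl⟩
  obtain ⟨Dt, hDt⟩ : ∃ a, a = 2 * (p ⬝ᵥ ξ) * ct := ⟨_, rfl⟩
  have htime' : 0 ≤ σ ^ 2 * N ^ 2 + 2 * τ * σ ^ 2 * N * Nt - M * (-(kk * wt) * D ^ 2
      + 2 * (1 - kk * w) * D * Dt) := by
    obtain ⟨c', hj, -⟩ := theta_jet hΩ hF hP s₁ R x₀ M kk ξ 0
      ((1 : ℝ), (0 : EuclideanSpace ℝ (Fin n))) hτe hσe rfl rfl hNe rfl rfl
      rfl rfl rfl hDe rfl rfl hw rfl rfl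
    obtain ⟨δ, hδ, hδ2⟩ := htime
    obtain ⟨-, φ', hd, hb', -⟩ := hj
    have hd0 := hd.self_of_nhds
    rw [hb'] at hd0
    have := deriv_nonneg_of_left_max hδ hd0 (by
      intro ε h1 h2
      simp only [smul_zero, add_zero, zero_smul]
      rw [h0]
      exact hδ2 ε h1 h2)
    have a1 : gr (dd ((1 : ℝ), (0 : EuclideanSpace ℝ (Fin n))) F) P ⬝ᵥ ξ = ct := by
      rw [hct, dd_sv]
    have a2 : 2 * (gr F P ⬝ᵥ gr (dd ((1 : ℝ), (0 : EuclideanSpace ℝ (Fin n))) F) P) = wt := by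
      rw [hwt, dd_sv, hp, dotProduct_comm]
    rw [hs_quad hΩ (dd_smooth hΩ hF _) hP, ← hNt, a1, a2, ← hp] at this
    simp only [Matrix.mulVec_zero, dotProduct_zero, WithLp.ofLp_zero] at this
    rw [hDt]
    linarith
  -- spatial data along the frame
  set N1 : Fin n → ℝ := fun k => (T *ᵥ ξ) ⬝ᵥ b k - (2 * z / w) * (q ⬝ᵥ b k) with hN1
  set N2 : Fin n → ℝ := fun k => b k ⬝ᵥ (F4 *ᵥ b k) - (4 / w) * ((q ⬝ᵥ b k) * ((T *ᵥ p) ⬝ᵥ b k))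
      + (2 * Pp / w ^ 2) * ((q ⬝ᵥ b k) * (q ⬝ᵥ b k)) with hN2
  set D2 : Fin n → ℝ := fun k => 2 * ((q ⬝ᵥ b k / w) ^ 2 * (p ⬝ᵥ p)) + 2 * (q ⬝ᵥ b k / w) ^ 2
      + 2 * (p ⬝ᵥ ξ) * (b k ⬝ᵥ (T *ᵥ b k)
        - (2 / w) * ((q ⬝ᵥ b k) * (r ⬝ᵥ b k))) with hD2
  set w2 : Fin n → ℝ := fun k => 2 * ((S *ᵥ b k) ⬝ᵥ (S *ᵥ b k)) + 2 * (b k ⬝ᵥ (Tp *ᵥ b k)) with hw2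
  set σ1 : Fin n → ℝ := fun k => -2 * (ThY x₀ P ⬝ᵥ b k) with hσ1
  set σ2 : Fin n → ℝ := fun k => -2 * (b k ⬝ᵥ b k) with hσ2
  have hframe : ∀ k, τ * (2 * σ * σ1 k * N ^ 2 + 2 * σ ^ 2 * N * N1 k)
        = M * (-(2 * kk * (r ⬝ᵥ b k))) * D ^ 2 ∧
      τ * ((2 * σ1 k ^ 2 + 2 * σ * σ2 k) * N ^ 2 + 4 * (2 * σ * σ1 k) * N * N1 k
          + σ ^ 2 * (2 * N1 k ^ 2 + 2 * N * N2 k))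
        - M * (-(kk * w2 k) * D ^ 2 + (1 - kk * w) * (2 * D * D2 k)) ≤ 0 := by
    intro k
    obtain ⟨β, hβ⟩ : ∃ β, β = (-(q ⬝ᵥ b k) / w) • p := ⟨_, rfl⟩
    have hSb : gr (dd (sv (b k)) F) P = S *ᵥ b k := by rw [hS, hs_mulVec hΩ hF hP]
    have hSbx : ∀ x, (S *ᵥ b k) ⬝ᵥ x = (S *ᵥ x) ⬝ᵥ b k := by
      intro x; rw [dotProduct_comm, symm_dot hSs, dotProduct_comm]
    have hξβ : ξ ⬝ᵥ β = -(q ⬝ᵥ b k) / w * (p ⬝ᵥ ξ) := by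
      rw [hβ, dotProduct_smul, dotProduct_comm ξ p, smul_eq_mul]
    have hpβ : p ⬝ᵥ β = -(q ⬝ᵥ b k) / w * (p ⬝ᵥ p) := by
      rw [hβ, dotProduct_smul, smul_eq_mul]
    have hpp : p ⬝ᵥ p = w - 1 := by linarith
    have e1 : N1 k = ξ ⬝ᵥ (hs (dd (sv (b k)) F) P *ᵥ ξ) + 2 * (ξ ⬝ᵥ (hs F P *ᵥ β)) := by
      rw [hs_quad hΩ (dd_smooth hΩ hF _) hP, ← dd_rot3 hΩ hF _ _ _ hP, dd_sv,
        ← hs_mulVec hΩ (dd_smooth hΩ hF _) hP, ← hT, ← hS, symm_dot hSs ξ β, ← hqdef, hβ,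
        smul_dotProduct, ← hz, smul_eq_mul, hN1]
      ring
    have e2 : N2 k = ξ ⬝ᵥ (hs (dd (sv (b k)) (dd (sv (b k)) F)) P *ᵥ ξ)
        + 4 * (ξ ⬝ᵥ (hs (dd (sv (b k)) F) P *ᵥ β)) + 2 * (β ⬝ᵥ (hs F P *ᵥ β)) := by
      rw [hs_quad hΩ (dd_smooth hΩ (dd_smooth hΩ hF _) _) hP,
        dd_congr hΩ (dd_rot3 hΩ hF (sv ξ) (sv (b k)) (sv (b k))) (sv ξ) hP,
        dd_rot3 hΩ (dd_smooth hΩ hF _) _ _ _ hP,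
        ← hs_quad hΩ (dd_smooth hΩ (dd_smooth hΩ hF _) _) hP, ← hF4,
        hs_quad hΩ (dd_smooth hΩ hF _) hP, dd_rot3 hΩ hF _ _ _ hP,
        ← hs_quad hΩ (dd_smooth hΩ hF _) hP, ← hT, ← hS, hβ]
      simp only [Matrix.mulVec_smul, smul_dotProduct, dotProduct_smul, smul_eq_mul]
      rw [← hrdef, ← hPp, symm_dot hTs p (b k), dotProduct_comm (b k) (T *ᵥ p), hN2]
      ring
    have ec1 : (q ⬝ᵥ b k) / w = gr (dd (sv (b k)) F) P ⬝ᵥ ξ + gr F P ⬝ᵥ β := by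
      rw [hSb, hSbx, ← hqdef, ← hp, hpβ, hpp]; field_simp; ring
    have ec2 : b k ⬝ᵥ (T *ᵥ b k) - (2 / w) * ((q ⬝ᵥ b k) * (r ⬝ᵥ b k))
        = gr (dd (sv (b k)) (dd (sv (b k)) F)) P ⬝ᵥ ξ + 2 * (gr (dd (sv (b k)) F) P ⬝ᵥ β) := by
      rw [hSb, hSbx, ← dd_sv ξ, dd_rot3 hΩ hF _ _ _ hP, ← hs_quad hΩ (dd_smooth hΩ hF _) hP, ← hT,
        hβ, Matrix.mulVec_smul, ← hrdef, smul_dotProduct, smul_eq_mul]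
      ring
    have eD1 : (0 : ℝ) = 2 * (ξ ⬝ᵥ β) + 2 * (p ⬝ᵥ ξ) * ((q ⬝ᵥ b k) / w) := by
      rw [hξβ]; ring
    have eD2 : D2 k = 2 * (β ⬝ᵥ β) + 2 * ((q ⬝ᵥ b k) / w) ^ 2
        + 2 * (p ⬝ᵥ ξ) * (b k ⬝ᵥ (T *ᵥ b k) - (2 / w) * ((q ⬝ᵥ b k) * (r ⬝ᵥ b k))) := by
      rw [hβ, hD2]
      simp only [smul_dotProduct, dotProduct_smul, smul_eq_mul]
      ring
    have ew1 : 2 * (r ⬝ᵥ b k) = 2 * (gr F P ⬝ᵥ gr (dd (sv (b k)) F) P) := by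
      rw [hSb, ← hp, dotProduct_comm p, hSbx]
    have ew2 : w2 k = 2 * (gr (dd (sv (b k)) F) P ⬝ᵥ gr (dd (sv (b k)) F) P)
        + 2 * (gr F P ⬝ᵥ gr (dd (sv (b k)) (dd (sv (b k)) F)) P) := by
      rw [hSb, ← hp, dotProduct_comm p (gr _ _), ← dd_sv p, dd_rot3 hΩ hF _ _ _ hP,
        ← hs_quad hΩ (dd_smooth hΩ hF _) hP, ← hTp]
    obtain ⟨c', hj, hc'⟩ := theta_jet hΩ hF hP s₁ R x₀ M kk ξ β (sv (b k)) (σ1 := σ1 k)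
      (σ2 := σ2 k) hτe hσe rfl rfl hNe e1 e2
      (by rw [hp]) ec1 ec2 hDe eD1 eD2 hw ew1 ew2
    have hmx := hj.of_isLocalMax (hlocmax (b k) β)
    rw [hc' rfl] at hmx
    have hz1 : (sv (b k)).1 = 0 := rfl
    rw [hz1] at hmx
    constructor
    · linear_combination hmx.1
    · linarith [hmx.2]
  have hLN := LN_id hb hwp hw0 hSs hTs hq hNp hPp rfl rfl rfl rfl (hNt.trans hE2) hz
    (N1 := N1) (N2 := N2) (fun k => rfl) (fun k => rfl)
  have hLD := LD_id hb hwp hw0 hq hDp hPp rfl rfl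
    (show Dt = _ by rw [hDt, hct, hE1]) (D2 := D2) (fun k => rfl)
  have hLw := Lw_ineq hb hwp hw0 hSs hq hlam0 hDp hD hPp rfl rfl
    (show wt = _ by rw [hwt, hEp]) (w2 := w2) (fun k => rfl)
  have hyy : ThY x₀ P ⬝ᵥ ThY x₀ P = R ^ 2 - σ := by rw [hσe, ThS]; ring
  have hyy0 : 0 ≤ ThY x₀ P ⬝ᵥ ThY x₀ P := Finset.sum_nonneg fun i _ => mul_self_nonneg _
  have hbb : ∀ k, b k ⬝ᵥ b k ≤ 1 := fun k => by nlinarith [hb1 k]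
  refine final_ineq (N1 := N1) (r := fun k => r ⬝ᵥ b k) (σ1 := σ1) (σ2 := σ2) hτ hw0 hm hkk hσ rfl
    rfl hD hlam0 hNl hV (fun k => (hframe k).1) ?_ hLN hLD hLw (by linarith) ?_ ?_
  · have hsum := Finset.sum_le_sum (s := Finset.univ) fun k _ => (hframe k).2
    simp only [Finset.sum_const_zero] at hsum
    have hsplit : ∑ k, (τ * ((2 * σ1 k ^ 2 + 2 * σ * σ2 k) * N ^ 2 + 4 * (2 * σ * σ1 k) * N * N1 k
          + σ ^ 2 * (2 * N1 k ^ 2 + 2 * N * N2 k))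
        - M * (-(kk * w2 k) * D ^ 2 + (1 - kk * w) * (2 * D * D2 k)))
      = τ * ∑ k, ((2 * σ1 k ^ 2 + 2 * σ * σ2 k) * N ^ 2 + 4 * (2 * σ * σ1 k) * N * N1 k
        + 2 * σ ^ 2 * N1 k ^ 2) + 2 * τ * σ ^ 2 * N * ∑ k, N2 k + M * kk * D ^ 2 * ∑ k, w2 k
        - 2 * M * (1 - kk * w) * D * ∑ k, D2 k := by
      simp only [Finset.mul_sum]
      rw [← Finset.sum_add_distrib, ← Finset.sum_add_distrib, ← Finset.sum_sub_distrib]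
      exact Finset.sum_congr rfl fun k _ => by ring
    rw [hsplit] at hsum
    linear_combination htime' + hsum
  · intro k
    have hcs : (ThY x₀ P ⬝ᵥ b k) ^ 2 ≤ (ThY x₀ P ⬝ᵥ ThY x₀ P) * (b k ⬝ᵥ b k) := by
      simpa only [← pow_two, dotProduct] using Finset.sum_mul_sq_le_sq_mul_sq Finset.univ
        (ThY x₀ P) (b k)
    have h1 : (ThY x₀ P ⬝ᵥ ThY x₀ P) * (b k ⬝ᵥ b k) ≤ (ThY x₀ P ⬝ᵥ ThY x₀ P) * 1 :=
      mul_le_mul_of_nonneg_left (hbb k) hyy0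
    simp only [hσ1]
    nlinarith
  · intro k
    simp only [hσ2]
    linarith [hbb k]
end maxpoint

section finish
variable {n : ℕ}

theorem dot_self_nonneg' (x : Fin n → ℝ) : 0 ≤ x ⬝ᵥ x :=
  Finset.sum_nonneg fun i _ => mul_self_nonneg _

theorem dot_self_pos' {x : Fin n → ℝ} (hx : x ≠ 0) : 0 < x ⬝ᵥ x := by
  obtain ⟨i, hi⟩ := Function.ne_iff.1 hx
  exact Finset.sum_pos' (fun _ _ => mul_self_nonneg _) ⟨i, Finset.mem_univ _, by
    have : x i ≠ 0 := hi
    exact mul_self_pos.2 this⟩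

theorem sum_swap3 (f : Fin n → Fin n → Fin n → ℝ) :
    ∑ l, ∑ a, ∑ c, f l a c = ∑ a, ∑ c, ∑ l, f l a c := by
  rw [Finset.sum_comm]
  exact Finset.sum_congr rfl fun a _ => Finset.sum_comm

theorem sum_swap6 (f : Fin n → Fin n → Fin n → Fin n → Fin n → Fin n → ℝ) :
    ∑ i, ∑ j, ∑ k, ∑ l, ∑ a, ∑ c, f i j k l a c = ∑ a, ∑ c, ∑ i, ∑ j, ∑ k, ∑ l, f i j k l a c :=
  (Finset.sum_congr rfl fun i _ => (Finset.sum_congr rfl fun j _ =>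
    (Finset.sum_congr rfl fun k _ => sum_swap3 (f i j k)).trans (sum_swap3 _)).trans
      (sum_swap3 _)).trans (sum_swap3 _)

theorem ff_frame {p : Fin n → ℝ} {w : ℝ} {b : Fin n → Fin n → ℝ} (S : Matrix (Fin n) (Fin n) ℝ)
    (hb : ∀ i j, ∑ k, b k i * b k j = (if i = j then (1 : ℝ) else 0) - p i * p j / w) :
    ∑ i, ∑ j, ∑ k, ∑ l, ((if i = k then (1 : ℝ) else 0) - p i * p k / w) *
      ((if j = l then (1 : ℝ) else 0) - p j * p l / w) * S i j * S k l
    = ∑ a, ∑ c, (b a ⬝ᵥ (S *ᵥ b c)) ^ 2 := by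
  have h1 : ∀ i j k l, ((if i = k then (1 : ℝ) else 0) - p i * p k / w) *
      ((if j = l then (1 : ℝ) else 0) - p j * p l / w) * S i j * S k l =
      ∑ a, ∑ c, (b a i * S i j * b c j) * (b a k * S k l * b c l) := by
    intro i j k l
    rw [← hb i k, ← hb j l, Finset.sum_mul_sum, Finset.sum_mul, Finset.sum_mul]
    refine Finset.sum_congr rfl fun a _ => ?_
    rw [Finset.sum_mul, Finset.sum_mul]
    exact Finset.sum_congr rfl fun c _ => by ring
  simp only [h1]
  rw [sum_swap6]
  refine Finset.sum_congr rfl fun a _ => Finset.sum_congr rfl fun c _ => ?_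
  rw [sum_dot, pow_two]
  simp only [Finset.sum_mul]
  refine Finset.sum_congr rfl fun i _ => Finset.sum_congr rfl fun j _ => ?_
  simp only [Finset.mul_sum]

theorem ff_bound {p : Fin n → ℝ} {w Q : ℝ} (hw : w = 1 + p ⬝ᵥ p) (hQ : 0 ≤ Q)
    (S : Matrix (Fin n) (Fin n) ℝ) (hS : Sᵀ = S)
    (H : ∀ x : Fin n → ℝ, (x ⬝ᵥ (S *ᵥ x)) ^ 2 ≤ Q * (x ⬝ᵥ x + (p ⬝ᵥ x) * (p ⬝ᵥ x)) ^ 2) :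
    ∑ i, ∑ j, ∑ k, ∑ l, ((if i = k then (1 : ℝ) else 0) - p i * p k / w) *
      ((if j = l then (1 : ℝ) else 0) - p j * p l / w) * (S i j / Real.sqrt w)
        * (S k l / Real.sqrt w) ≤ n ^ 2 * Q := by
  have hw1 : 1 ≤ w := by linarith [dot_self_nonneg' p]
  obtain ⟨b, hb, hb1⟩ := exists_frame p w hw
  have hsq : Real.sqrt w * Real.sqrt w = w := Real.mul_self_sqrt (by linarith)
  have e : ∀ i j k l, ((if i = k then (1 : ℝ) else 0) - p i * p k / w) *
      ((if j = l then (1 : ℝ) else 0) - p j * p l / w) * (S i j / Real.sqrt w)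
        * (S k l / Real.sqrt w) = (((if i = k then (1 : ℝ) else 0) - p i * p k / w) *
      ((if j = l then (1 : ℝ) else 0) - p j * p l / w) * S i j * S k l) * w⁻¹ := by
    intro i j k l
    rw [div_eq_mul_inv (S i j), div_eq_mul_inv (S k l)]
    have : (Real.sqrt w)⁻¹ * (Real.sqrt w)⁻¹ = w⁻¹ := by rw [← mul_inv, hsq]
    rw [← this]; ring
  simp only [e, ← Finset.sum_mul]
  rw [ff_frame S hb]
  have key : ∀ a c, (b a ⬝ᵥ (S *ᵥ b c)) ^ 2 ≤ Q := by
    intro a c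
    obtain ⟨q, hq0, hq⟩ : ∃ q : ℝ, 0 ≤ q ∧ q ^ 2 = Q := ⟨Real.sqrt Q, Real.sqrt_nonneg _,
      Real.sq_sqrt hQ⟩
    have H2 : ∀ x : Fin n → ℝ, |x ⬝ᵥ (S *ᵥ x)| ≤ q * (x ⬝ᵥ x + (p ⬝ᵥ x) * (p ⬝ᵥ x)) := by
      intro x
      refine abs_le_of_sq_le_sq ?_ ?_
      · rw [mul_pow, hq]; exact H x
      · exact mul_nonneg hq0 (add_nonneg (dot_self_nonneg' x) (mul_self_nonneg _))
    have h1 := abs_le.1 (H2 (b a + b c))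
    have h2 := abs_le.1 (H2 (b a - b c))
    simp only [Matrix.mulVec_add, Matrix.mulVec_sub, dotProduct_add, dotProduct_sub,
      add_dotProduct, sub_dotProduct, symm_dot hS (b c) (b a), dotProduct_comm (b c) (b a)] at h1 h2
    have ha := hb1 a
    have hc := hb1 c
    rw [← hq]
    refine sq_le_sq' ?_ ?_
    · have : q * (b a ⬝ᵥ b a + (p ⬝ᵥ b a) ^ 2) = q := by rw [ha, mul_one]
      have : q * (b c ⬝ᵥ b c + (p ⬝ᵥ b c) ^ 2) = q := by rw [hc, mul_one]
      linarith
    · have : q * (b a ⬝ᵥ b a + (p ⬝ᵥ b a) ^ 2) = q := by rw [ha, mul_one]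
      have : q * (b c ⬝ᵥ b c + (p ⬝ᵥ b c) ^ 2) = q := by rw [hc, mul_one]
      linarith
  have hs : ∑ a, ∑ c, (b a ⬝ᵥ (S *ᵥ b c)) ^ 2 ≤ n ^ 2 * Q := by
    calc _ ≤ ∑ a : Fin n, ∑ c : Fin n, Q :=
          Finset.sum_le_sum fun a _ => Finset.sum_le_sum fun c _ => key a c
      _ = n ^ 2 * Q := by simp; ring
  have hs0 : 0 ≤ ∑ a, ∑ c, (b a ⬝ᵥ (S *ᵥ b c)) ^ 2 := by positivity
  calc _ ≤ (∑ a, ∑ c, (b a ⬝ᵥ (S *ᵥ b c)) ^ 2) * 1 :=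
        mul_le_mul_of_nonneg_left (inv_le_one_of_one_le₀ hw1) hs0
    _ ≤ _ := by linarith

theorem ThY_sq (x₀ : EuclideanSpace ℝ (Fin n)) (P : ℝ × EuclideanSpace ℝ (Fin n)) :
    ThY x₀ P ⬝ᵥ ThY x₀ P = dist P.2 x₀ ^ 2 := by
  rw [dist_eq_norm, EuclideanSpace.real_norm_sq_eq]
  simp [ThY, dotProduct, pow_two]

variable {Ω : Set (ℝ × EuclideanSpace ℝ (Fin n))} {F : ℝ × EuclideanSpace ℝ (Fin n) → ℝ}

theorem cont_gr (hΩ : IsOpen Ω) (hF : ContDiffOn ℝ (⊤ : ℕ∞) F Ω) (i : Fin n) :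
    ContinuousOn (fun q : (ℝ × EuclideanSpace ℝ (Fin n)) × (Fin n → ℝ) => gr F q.1 i)
      (Ω ×ˢ univ) :=
  (dd_smooth hΩ hF (ez i)).continuousOn.comp continuousOn_fst fun _ h => h.1

theorem cont_hs (hΩ : IsOpen Ω) (hF : ContDiffOn ℝ (⊤ : ℕ∞) F Ω) (i j : Fin n) :
    ContinuousOn (fun q : (ℝ × EuclideanSpace ℝ (Fin n)) × (Fin n → ℝ) => hs F q.1 i j)
      (Ω ×ˢ univ) :=
  (dd_smooth hΩ (dd_smooth hΩ hF (ez j)) (ez i)).continuousOn.comp continuousOn_fst fun _ h => h.1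

theorem cont_ThN (hΩ : IsOpen Ω) (hF : ContDiffOn ℝ (⊤ : ℕ∞) F Ω) :
    ContinuousOn (fun q : (ℝ × EuclideanSpace ℝ (Fin n)) × (Fin n → ℝ) => ThN F q.1 q.2)
      (Ω ×ˢ univ) := by
  simp only [ThN, sum_dot]
  have := cont_hs hΩ hF
  fun_prop

theorem cont_ThW (hΩ : IsOpen Ω) (hF : ContDiffOn ℝ (⊤ : ℕ∞) F Ω) :
    ContinuousOn (fun q : (ℝ × EuclideanSpace ℝ (Fin n)) × (Fin n → ℝ) => ThW F q.1)
      (Ω ×ˢ univ) := by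
  simp only [ThW, dotProduct]
  have := cont_gr hΩ hF
  fun_prop

theorem cont_ThD (hΩ : IsOpen Ω) (hF : ContDiffOn ℝ (⊤ : ℕ∞) F Ω) :
    ContinuousOn (fun q : (ℝ × EuclideanSpace ℝ (Fin n)) × (Fin n → ℝ) => ThD F q.1 q.2)
      (Ω ×ˢ univ) := by
  simp only [ThD, dotProduct]
  have := cont_gr hΩ hF
  fun_prop

theorem cont_ThS (R : ℝ) (x₀ : EuclideanSpace ℝ (Fin n)) :
    Continuous (fun q : (ℝ × EuclideanSpace ℝ (Fin n)) × (Fin n → ℝ) => ThS R x₀ q.1) := by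
  simp only [ThS, ThY, dotProduct]
  fun_prop

theorem ThD_pos (P : ℝ × EuclideanSpace ℝ (Fin n)) {ξ : Fin n → ℝ} (h : ξ ≠ 0) : 0 < ThD F P ξ :=
  add_pos_of_pos_of_nonneg (dot_self_pos' h) (mul_self_nonneg _)

theorem ThN_smul (P : ℝ × EuclideanSpace ℝ (Fin n)) (c : ℝ) (ξ : Fin n → ℝ) :
    ThN F P (c • ξ) = c ^ 2 * ThN F P ξ := by
  simp only [ThN, Matrix.mulVec_smul, smul_dotProduct, dotProduct_smul, smul_eq_mul]; ring

theorem ThD_smul (P : ℝ × EuclideanSpace ℝ (Fin n)) (c : ℝ) (ξ : Fin n → ℝ) :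
    ThD F P (c • ξ) = c ^ 2 * ThD F P ξ := by
  simp only [ThD, smul_dotProduct, dotProduct_smul, smul_eq_mul]; ring

theorem ThW_ge (P : ℝ × EuclideanSpace ℝ (Fin n)) : 1 ≤ ThW F P := by
  have := dot_self_nonneg' (gr F P); rw [ThW]; linarith

theorem curv_bound (hΩ : IsOpen Ω) (hF : ContDiffOn ℝ (⊤ : ℕ∞) F Ω)
    (hpde : ∀ Q ∈ Ω, dd ((1 : ℝ), (0 : EuclideanSpace ℝ (Fin n))) F Q =
      (hs F Q).trace - (gr F Q ⬝ᵥ (hs F Q *ᵥ gr F Q)) * (1 + gr F Q ⬝ᵥ gr F Q)⁻¹)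
    {s₁ s R W : ℝ} (hs1 : s₁ < s) (hR : 0 < R) (x₀ : EuclideanSpace ℝ (Fin n))
    (hsub : ∀ t ∈ Icc s₁ s, ∀ x ∈ closedBall x₀ R, (t, x) ∈ Ω)
    (hW : ∀ t ∈ Icc s₁ s, ∀ x ∈ closedBall x₀ R, ThW F (t, x) ≤ W)
    {x : EuclideanSpace ℝ (Fin n)} (hx : x ∈ closedBall x₀ R) (ξ : Fin n → ℝ) :
    (s - s₁) * ThS R x₀ (s, x) ^ 2 * ThN F (s, x) ξ ^ 2 ≤
      W ^ 2 * (R ^ 4 + 52 * n * (s - s₁) * R ^ 2) * ThD F (s, x) ξ ^ 2 := by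
  have hsI : s ∈ Icc s₁ s := ⟨hs1.le, le_rfl⟩
  have hW1 : 1 ≤ W := (ThW_ge _).trans (hW s hsI x hx)
  by_cases hξ : ξ = 0
  · subst hξ; simp [ThN, ThD]
  obtain ⟨kk, hkk⟩ : ∃ k, k = 1 / (2 * W) := ⟨_, rfl⟩
  have hkk0 : 0 < kk := by rw [hkk]; positivity
  have hkW : kk * W = 1 / 2 := by rw [hkk]; field_simp
  have hm : ∀ t ∈ Icc s₁ s, ∀ x ∈ closedBall x₀ R, 1 / 2 ≤ 1 - kk * ThW F (t, x) := by
    intro t ht x hx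
    have := mul_le_mul_of_nonneg_left (hW t ht x hx) hkk0.le
    linarith
  set Z : Set ((ℝ × EuclideanSpace ℝ (Fin n)) × (Fin n → ℝ)) :=
    (Icc s₁ s ×ˢ closedBall x₀ R) ×ˢ sphere 0 1 with hZ
  have hZc : IsCompact Z := (isCompact_Icc.prod (isCompact_closedBall _ _)).prod (isCompact_sphere _ _)
  have hZs : Z ⊆ Ω ×ˢ univ := fun q hq => ⟨hsub q.1.1 hq.1.1 q.1.2 hq.1.2, trivial⟩
  have hnorm : ‖ξ‖ ≠ 0 := norm_ne_zero_iff.2 hξ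
  have hsph : ∀ y : Fin n → ℝ, y ≠ 0 → ‖y‖⁻¹ • y ∈ sphere (0 : Fin n → ℝ) 1 := by
    intro y hy
    have : ‖y‖ ≠ 0 := norm_ne_zero_iff.2 hy
    simp [norm_smul, this]
  have hne0 : ∀ y ∈ sphere (0 : Fin n → ℝ) 1, y ≠ 0 := by
    rintro y hy rfl; simp at hy
  have hZne : Z.Nonempty := ⟨((s, x), ‖ξ‖⁻¹ • ξ), ⟨hsI, hx⟩, hsph ξ hξ⟩
  set Ψ : (ℝ × EuclideanSpace ℝ (Fin n)) × (Fin n → ℝ) → ℝ := fun q =>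
    (q.1.1 - s₁) * ThS R x₀ q.1 ^ 2 * ThN F q.1 q.2 ^ 2 / ((1 - kk * ThW F q.1) * ThD F q.1 q.2 ^ 2)
    with hΨ
  have hden : ∀ q ∈ Z, 0 < (1 - kk * ThW F q.1) * ThD F q.1 q.2 ^ 2 := by
    intro q hq
    have h1 := hm q.1.1 hq.1.1 q.1.2 hq.1.2
    have h2 : 0 < ThD F q.1 q.2 := ThD_pos _ (hne0 _ hq.2)
    have h3 : 0 < 1 - kk * ThW F q.1 := by
      have : (q.1.1, q.1.2) = q.1 := rfl
      rw [this] at h1; linarith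
    positivity
  have hcont : ContinuousOn Ψ Z := by
    have c1 := (cont_ThN hΩ hF).mono hZs
    have c2 := (cont_ThD hΩ hF).mono hZs
    have c3 := (cont_ThW hΩ hF).mono hZs
    have c4 := (cont_ThS R x₀).continuousOn (s := Z)
    refine ContinuousOn.div ?_ ?_ fun q hq => (hden q hq).ne'
    · fun_prop
    · fun_prop
  obtain ⟨⟨P, η⟩, hq, hmax⟩ := hZc.exists_isMaxOn hZne hcont
  obtain ⟨M, hM⟩ : ∃ M, M = Ψ (P, η) := ⟨_, rfl⟩
  have hTh : ∀ Q : ℝ × EuclideanSpace ℝ (Fin n), Q.1 ∈ Icc s₁ s → Q.2 ∈ closedBall x₀ R →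
      ∀ y, Theta F s₁ R x₀ M kk Q y ≤ 0 := by
    intro Q hQ1 hQ2 y
    by_cases hy : y = 0
    · subst hy; simp [Theta, ThN, ThD]
    have hmem : (Q, ‖y‖⁻¹ • y) ∈ Z := ⟨⟨hQ1, hQ2⟩, hsph y hy⟩
    have h1 : Ψ (Q, ‖y‖⁻¹ • y) ≤ M := hM ▸ hmax hmem
    have h2 := (div_le_iff₀ (hden _ hmem)).1 h1
    simp only [ThN_smul, ThD_smul] at h2
    have h3 : 0 < ‖y‖ := norm_pos_iff.2 hy
    have h4 : ((‖y‖⁻¹ ^ 2) ^ 2) * Theta F s₁ R x₀ M kk Q y ≤ 0 := by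
      rw [Theta]; linarith
    have h5 : 0 < (‖y‖⁻¹ ^ 2) ^ 2 := by positivity
    by_contra hcon
    push Not at hcon
    linarith [mul_pos h5 hcon]
  have hPη := hden _ hq
  have hMeq : Theta F s₁ R x₀ M kk P η = 0 := by
    have := (div_eq_iff hPη.ne').1 hM.symm
    rw [Theta]; linear_combination this
  have hB0 : 0 ≤ W ^ 2 * (R ^ 4 + 52 * n * (s - s₁) * R ^ 2) := by
    have := sub_pos.2 hs1
    positivity
  have hMB : M ≤ W ^ 2 * (R ^ 4 + 52 * n * (s - s₁) * R ^ 2) := by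
    by_cases hM0 : M ≤ 0
    · exact hM0.trans hB0
    push Not at hM0
    have hnum : (P.1 - s₁) * ThS R x₀ P ^ 2 * ThN F P η ^ 2 ≠ 0 := by
      intro h
      rw [hM, hΨ] at hM0
      simp only [h, zero_div, lt_irrefl] at hM0
    have hτ : 0 < P.1 - s₁ := lt_of_le_of_ne (sub_nonneg.2 hq.1.1.1) (by
      intro h; apply hnum; rw [← h]; ring)
    have hdist : dist P.2 x₀ ≤ R := hq.1.2
    have hσ0 : 0 ≤ ThS R x₀ P := by
      rw [ThS, ThY_sq]; nlinarith [dist_nonneg (x := P.2) (y := x₀)]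
    have hσ : 0 < ThS R x₀ P := lt_of_le_of_ne hσ0 (by
      intro h; apply hnum; rw [← h]; ring)
    have hN : ThN F P η ≠ 0 := by
      intro h; apply hnum; rw [h]; ring
    have hball : P.2 ∈ ball x₀ R := by
      rw [ThS, ThY_sq] at hσ
      exact lt_of_pow_lt_pow_left₀ 2 hR.le (by linarith)
    have hPW := hW P.1 hq.1.1 P.2 hq.1.2
    have hPm := hm P.1 hq.1.1 P.2 hq.1.2
    have hPP : (P.1, P.2) = P := rfl
    rw [hPP] at hPW hPm
    have hw1 : 1 ≤ ThW F P := ThW_ge P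
    have res := max_point hΩ hF (hsub P.1 hq.1.1 P.2 hq.1.2) hpde s₁ R x₀ M kk η hkk0 hτ hσ
      (by linarith) (ThD_pos P (hne0 _ hq.2)) hN hMeq ?_ ?_
    · have hσR : ThS R x₀ P ≤ R ^ 2 := by
        rw [ThS, ThY_sq]; nlinarith [sq_nonneg (dist P.2 x₀)]
      have h1 : ThS R x₀ P ^ 2 ≤ R ^ 4 := by
        calc _ ≤ (R ^ 2) ^ 2 := by gcongr
          _ = _ := by ring
      have h2 : (1 - kk * ThW F P) / (kk * ThW F P) ≤ 2 * W := by
        rw [div_le_iff₀ (by positivity)]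
        have : 2 * W * (kk * ThW F P) = ThW F P := by linear_combination 2 * ThW F P * hkW
        rw [this]
        have : 0 < kk * ThW F P := by positivity
        linarith
      have h3 : P.1 - s₁ ≤ s - s₁ := by linarith [hq.1.1.2]
      have h4 : n * (P.1 - s₁) * R ^ 2 * (8 * ((1 - kk * ThW F P) / (kk * ThW F P)) + 36) ≤
          n * (s - s₁) * R ^ 2 * (8 * (2 * W) + 36) := by
        have : 0 < (1 - kk * ThW F P) / (kk * ThW F P) := by
          apply div_pos <;> [linarith; positivity]
        have : 0 < s - s₁ := sub_pos.2 hs1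
        gcongr
      have h5 : M = W * (2 * kk * M) := by linear_combination -2 * M * hkW
      have hT : 0 < s - s₁ := sub_pos.2 hs1
      calc M = W * (2 * kk * M) := h5
        _ ≤ W * (R ^ 4 + n * (s - s₁) * R ^ 2 * (8 * (2 * W) + 36)) := by
          gcongr
          linarith
        _ ≤ W * (W * R ^ 4 + n * (s - s₁) * R ^ 2 * (8 * (2 * W) + 36 * W)) := by
          have : R ^ 4 ≤ W * R ^ 4 := le_mul_of_one_le_left (by positivity) hW1
          gcongr
          linarith
        _ = _ := by ring
    · have hcs : ContinuousAt (fun Q : ℝ × EuclideanSpace ℝ (Fin n) => Q.2) P := by fun_prop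
      filter_upwards [hcs.eventually_mem (isOpen_ball.mem_nhds hball)] with Q hQ hQ1 y
      exact hTh Q (hQ1 ▸ hq.1.1) (ball_subset_closedBall hQ) y
    · refine ⟨P.1 - s₁, hτ, fun ε h1 h2 => hTh _ ?_ ?_ _⟩
      · have : P.1 ≤ s := hq.1.1.2
        constructor <;> simp <;> linarith
      · simpa using hq.1.2
  have hfin := hTh (s, x) hsI hx ξ
  have hms := hm s hsI x hx
  have hM0 : 0 ≤ M := by
    rw [hM]
    refine div_nonneg ?_ hPη.le
    have : 0 ≤ P.1 - s₁ := sub_nonneg.2 hq.1.1.1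
    positivity
  rw [Theta] at hfin
  have hwn : 0 ≤ kk * ThW F (s, x) := mul_nonneg hkk0.le (by linarith [ThW_ge (F := F) (s, x)])
  calc _ ≤ M * ((1 - kk * ThW F (s, x)) * ThD F (s, x) ξ ^ 2) := by
        simp only at hfin
        linarith
    _ ≤ (W ^ 2 * (R ^ 4 + 52 * n * (s - s₁) * R ^ 2)) * (1 * ThD F (s, x) ξ ^ 2) := by
        have h1 : 1 - kk * ThW F (s, x) ≤ 1 := by linarith
        have h2 : 0 ≤ 1 - kk * ThW F (s, x) := by linarith
        gcongr
    _ = _ := by ring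

/-! Bridge to the frozen definitions. -/

theorem slice_fderiv (hΩ : IsOpen Ω) (hF : ContDiffOn ℝ (⊤ : ℕ∞) F Ω) {t : ℝ}
    {x : EuclideanSpace ℝ (Fin n)} (h : (t, x) ∈ Ω) (v : EuclideanSpace ℝ (Fin n)) :
    fderiv ℝ (fun y => F (t, y)) x v = dd (0, v) F (t, x) := by
  have h1 := (smooth_diffAt hΩ hF h).hasFDerivAt.comp x (hasFDerivAt_prodMk_right t x)
  have h2 : fderiv ℝ (fun y => F (t, y)) x = _ := h1.fderiv
  rw [h2]; simp [dd]

theorem slice_deriv (hΩ : IsOpen Ω) (hF : ContDiffOn ℝ (⊤ : ℕ∞) F Ω) {t : ℝ}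
    {x : EuclideanSpace ℝ (Fin n)} (h : (t, x) ∈ Ω) :
    deriv (fun y => F (y, x)) t = dd (1, 0) F (t, x) := by
  have h1 := (smooth_diffAt hΩ hF h).hasFDerivAt.comp t (hasFDerivAt_prodMk_left (𝕜 := ℝ) t x)
  have h2 := h1.hasDerivAt.deriv
  have h3 : deriv (fun y => F (y, x)) t = _ := h2
  rw [h3]; simp [dd]

variable {f : ℝ → EuclideanSpace ℝ (Fin n) → ℝ}

theorem pd_gr (hΩ : IsOpen Ω)
    (hF : ContDiffOn ℝ (⊤ : ℕ∞) (fun p : ℝ × EuclideanSpace ℝ (Fin n) => f p.1 p.2) Ω) {t : ℝ}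
    {x : EuclideanSpace ℝ (Fin n)} (h : (t, x) ∈ Ω) (i : Fin n) :
    pd (f t) x i = gr (fun p : ℝ × EuclideanSpace ℝ (Fin n) => f p.1 p.2) (t, x) i :=
  slice_fderiv hΩ hF h _

theorem pd2_hs (hΩ : IsOpen Ω)
    (hF : ContDiffOn ℝ (⊤ : ℕ∞) (fun p : ℝ × EuclideanSpace ℝ (Fin n) => f p.1 p.2) Ω) {t : ℝ}
    {x : EuclideanSpace ℝ (Fin n)} (h : (t, x) ∈ Ω) (i j : Fin n) :
    pd2 (f t) x i j = hs (fun p : ℝ × EuclideanSpace ℝ (Fin n) => f p.1 p.2) (t, x) i j := by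
  rw [pd2, hs, Matrix.of_apply, ez, ← slice_fderiv hΩ (dd_smooth hΩ hF _) h]
  have hc : ContinuousAt (fun y : EuclideanSpace ℝ (Fin n) => (t, y)) x := by fun_prop
  have : (fun y => pd (f t) y j) =ᶠ[nhds x]
      fun y => dd (ez j) (fun p : ℝ × EuclideanSpace ℝ (Fin n) => f p.1 p.2) (t, y) := by
    filter_upwards [hc.eventually_mem (hΩ.mem_nhds h)] with y hy using pd_gr hΩ hF hy j
  rw [this.fderiv_eq]

theorem gradNormSq_gr (hΩ : IsOpen Ω)
    (hF : ContDiffOn ℝ (⊤ : ℕ∞) (fun p : ℝ × EuclideanSpace ℝ (Fin n) => f p.1 p.2) Ω) {t : ℝ}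
    {x : EuclideanSpace ℝ (Fin n)} (h : (t, x) ∈ Ω) :
    gradNormSq (f t) x = gr (fun p : ℝ × EuclideanSpace ℝ (Fin n) => f p.1 p.2) (t, x) ⬝ᵥ
      gr (fun p : ℝ × EuclideanSpace ℝ (Fin n) => f p.1 p.2) (t, x) := by
  simp only [gradNormSq, pd_gr hΩ hF h, dotProduct, pow_two]

theorem rhs_eq (p : Fin n → ℝ) (S : Matrix (Fin n) (Fin n) ℝ) (w : ℝ) :
    ∑ i, ∑ j, ((if i = j then (1 : ℝ) else 0) - p i * p j / w) * S i j =
      S.trace - (p ⬝ᵥ (S *ᵥ p)) * w⁻¹ := by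
  rw [sum_dot]
  simp only [sub_mul, Finset.sum_sub_distrib, Matrix.trace, Matrix.diag, Finset.sum_mul]
  congr 1
  · simp
  · exact Finset.sum_congr rfl fun i _ => Finset.sum_congr rfl fun j _ => by ring

end finish

theorem localcurvethm (n : ℕ) (hn : 1 ≤ n) :
    ∃ C : ℝ, 1 < C ∧
      ∀ (ρ : ℝ), 0 < ρ → ∀ (t₁ : ℝ) (t₂ : EReal), (t₁ : EReal) < t₂ →
        ∀ (x₀ : EuclideanSpace ℝ (Fin n)) (f : ℝ → EuclideanSpace ℝ (Fin n) → ℝ),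
          IsGMCF {t : ℝ | t₁ < t ∧ (t : EReal) < t₂} (Metric.ball x₀ (2 * ρ)) f →
          ∀ s₁ : ℝ, t₁ < s₁ → (s₁ : EReal) < t₂ →
          ∀ s : ℝ, s₁ < s → (s : EReal) < t₂ →
          ∀ K : ℝ,
            (∀ t ∈ Set.Icc s₁ s, ∀ y ∈ Metric.ball x₀ (2 * ρ),
              (1 + gradNormSq (f t) y) ^ 2 ≤ K) →
            ∀ x ∈ Metric.ball x₀ ρ,
              secondFF2 (f s) x ≤ C * ((s - s₁)⁻¹ + (ρ ^ 2)⁻¹) * K := by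
  have hn1 : (1 : ℝ) ≤ n := by exact_mod_cast hn
  have hn3 : (1 : ℝ) ≤ (n : ℝ) ^ 3 := one_le_pow₀ hn1
  refine ⟨200 * (n : ℝ) ^ 3, by linarith, ?_⟩
  intro ρ hρ t₁ t₂ _ x₀ f hf s₁ hs1 hs1' s hss hs2 K hK x hx
  obtain ⟨F, hFe⟩ : ∃ F, F = fun p : ℝ × EuclideanSpace ℝ (Fin n) => f p.1 p.2 := ⟨_, rfl⟩
  obtain ⟨Ω, hΩe⟩ : ∃ Ω, Ω = {t : ℝ | t₁ < t ∧ (t : EReal) < t₂} ×ˢ Metric.ball x₀ (2 * ρ) :=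
    ⟨_, rfl⟩
  have hΩ : IsOpen Ω := by
    rw [hΩe]
    refine IsOpen.prod ?_ isOpen_ball
    exact (isOpen_lt continuous_const continuous_id).inter
      (isOpen_lt continuous_coe_real_ereal continuous_const)
  have hF : ContDiffOn ℝ (⊤ : ℕ∞) (fun p : ℝ × EuclideanSpace ℝ (Fin n) => f p.1 p.2) Ω :=
    hΩe ▸ hf.1
  have hmemI : ∀ t ∈ Icc s₁ s, t ∈ {t : ℝ | t₁ < t ∧ (t : EReal) < t₂} := fun t ht =>
    ⟨hs1.trans_le ht.1, lt_of_le_of_lt (EReal.coe_le_coe_iff.2 ht.2) hs2⟩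
  have hpd : ∀ t y, (t, y) ∈ Ω → pd (f t) y = gr F (t, y) := fun t y h => by
    ext i; rw [hFe]; exact pd_gr hΩ hF h i
  have hpd2 : ∀ t y, (t, y) ∈ Ω → ∀ i j, pd2 (f t) y i j = hs F (t, y) i j := fun t y h i j => by
    rw [hFe]; exact pd2_hs hΩ hF h i j
  have hgn : ∀ t y, (t, y) ∈ Ω → gradNormSq (f t) y = gr F (t, y) ⬝ᵥ gr F (t, y) :=
    fun t y h => by rw [hFe]; exact gradNormSq_gr hΩ hF h
  have hpde : ∀ Q ∈ Ω, dd ((1 : ℝ), (0 : EuclideanSpace ℝ (Fin n))) F Q =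
      (hs F Q).trace - (gr F Q ⬝ᵥ (hs F Q *ᵥ gr F Q)) * (1 + gr F Q ⬝ᵥ gr F Q)⁻¹ := by
    rintro ⟨t, y⟩ hQ
    have hQ' := hQ
    rw [hΩe] at hQ'
    have h1 := hf.2 t hQ'.1 y hQ'.2
    have h2 := slice_deriv hΩ hF hQ
    rw [← hFe] at h2
    rw [← h2, hFe]
    rw [← hFe]
    simp only
    rw [h1, mcfRHS, ← rhs_eq]
    simp only [hpd t y hQ, hpd2 t y hQ, hgn t y hQ]
  rw [← hFe] at hF
  obtain ⟨W, hWe⟩ : ∃ W, W = Real.sqrt K := ⟨_, rfl⟩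
  have hball : ∀ y ∈ closedBall x₀ (3 / 2 * ρ), y ∈ ball x₀ (2 * ρ) := fun y hy =>
    closedBall_subset_ball (by linarith) hy
  have hsub : ∀ t ∈ Icc s₁ s, ∀ y ∈ closedBall x₀ (3 / 2 * ρ), (t, y) ∈ Ω := fun t ht y hy => by
    rw [hΩe]; exact ⟨hmemI t ht, hball y hy⟩
  have hWb : ∀ t ∈ Icc s₁ s, ∀ y ∈ closedBall x₀ (3 / 2 * ρ), ThW F (t, y) ≤ W := by
    intro t ht y hy
    rw [ThW, hWe, ← hgn t y (hsub t ht y hy)]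
    exact Real.le_sqrt_of_sq_le (hK t ht y (hball y hy))
  have hxR : x ∈ closedBall x₀ (3 / 2 * ρ) :=
    ball_subset_closedBall (ball_subset_ball (by linarith) hx)
  have hsI : s ∈ Icc s₁ s := ⟨hss.le, le_rfl⟩
  have hK0 : 0 ≤ K := le_trans (sq_nonneg _) (hK s hsI x (hball x hxR))
  have hWK : W ^ 2 = K := by rw [hWe, Real.sq_sqrt hK0]
  have hT : 0 < s - s₁ := sub_pos.2 hss
  have hPΩ := hsub s hsI x hxR
  have hσ : ρ ^ 2 ≤ ThS (3 / 2 * ρ) x₀ (s, x) := by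
    have h1 : dist x x₀ < ρ := hx
    rw [ThS, ThY_sq]
    nlinarith [dist_nonneg (x := x) (y := x₀)]
  obtain ⟨Q, hQ⟩ : ∃ Q, Q = 200 * n * ((s - s₁)⁻¹ + (ρ ^ 2)⁻¹) * K := ⟨_, rfl⟩
  have hQ0 : 0 ≤ Q := by rw [hQ]; positivity
  have H : ∀ y : Fin n → ℝ, (y ⬝ᵥ (hs F (s, x) *ᵥ y)) ^ 2 ≤
      Q * (y ⬝ᵥ y + (gr F (s, x) ⬝ᵥ y) * (gr F (s, x) ⬝ᵥ y)) ^ 2 := by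
    intro y
    have hb := curv_bound hΩ hF hpde hss (by positivity) x₀ hsub hWb hxR y
    rw [hWK] at hb
    change ThN F (s, x) y ^ 2 ≤ Q * ThD F (s, x) y ^ 2
    have h1 : (s - s₁) * (ρ ^ 2) ^ 2 * ThN F (s, x) y ^ 2 ≤
        (s - s₁) * ThS (3 / 2 * ρ) x₀ (s, x) ^ 2 * ThN F (s, x) y ^ 2 := by gcongr
    have h2 : K * ((3 / 2 * ρ) ^ 4 + 52 * n * (s - s₁) * (3 / 2 * ρ) ^ 2) ≤
        (s - s₁) * (ρ ^ 2) ^ 2 * Q := by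
      have e : (s - s₁) * (ρ ^ 2) ^ 2 * Q =
          K * (200 * n * ρ ^ 4 + 200 * n * (s - s₁) * ρ ^ 2) := by
        rw [hQ]; field_simp
      rw [e]
      refine mul_le_mul_of_nonneg_left ?_ hK0
      have h3 : ρ ^ 4 ≤ n * ρ ^ 4 := le_mul_of_one_le_left (by positivity) hn1
      have h4 : 0 ≤ n * (s - s₁) * ρ ^ 2 := by positivity
      nlinarith
    have h5 : (s - s₁) * (ρ ^ 2) ^ 2 * ThN F (s, x) y ^ 2 ≤
        (s - s₁) * (ρ ^ 2) ^ 2 * (Q * ThD F (s, x) y ^ 2) := by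
      calc _ ≤ _ := h1
        _ ≤ _ := hb
        _ ≤ ((s - s₁) * (ρ ^ 2) ^ 2 * Q) * ThD F (s, x) y ^ 2 := by gcongr
        _ = _ := by ring
    exact le_of_mul_le_mul_left h5 (by positivity)
  have hfin := ff_bound rfl hQ0 (hs F (s, x)) (hs_symm hΩ hF hPΩ) H
  rw [secondFF2]
  simp only [hpd s x hPΩ, hpd2 s x hPΩ, hgn s x hPΩ]
  refine hfin.trans (le_of_eq ?_)
  rw [hQ]; ring
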